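/- (Stabilization theorem for proper groupoids.) Let G be a second countable locally compact Hausdorff proper groupoid with unit space Y and left Haar system, and let P be any G-Hilbert module. Then there is a G-equivariant unitary isomorphism P ⊕ P_G^∞ ≅ P_G^∞. -/

import Mathlib

/-!
The proof follows Mingo and Phillips: two Hilbert modules `S` and `N` are unitarily equivalent as
soon as there is an adjointable operator `T : S → N` such that both `T` and its adjoint `T'` have
dense range. The unitary is the partial isometry in the polar decomposition of `T`. If `T` is
equivariant then so are `T' T`, its square root, and the unitary (`exists_unitary`). The square
root is obtained from the power series of `√(1 - t)`, applied to `1 - T' T` for a contraction `T`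
(`exists_sqrt_one_sub`).

It remains to construct such an operator for `S = P ⊕ P_G^∞` and `N = P_G^∞`. For an element `η` of
`P` with compact support, the analysis operator `V p = (g ↦ ⟨g · η, p⟩)` maps `P` to `P_G`: since `G`
is proper, this function has compact support in `G` whenever `p` has compact support in `Y`. It is
equivariant, and its adjoint is the synthesis operator `W F = ∫ F(g) (g · η)`. When `F` runs through
functions of integral one which concentrate near the units, `W F` converges to `η`, so `η` lies in
the closure of the range of `W` (`exists_pair`). Let `η n` be a dense sequence of compactly
supported elements of `P` in which every term occurs infinitely often, and let `V n`, `W n` be the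
operators of `η n`, scaled to be contractions. The operator `T' : P_G^∞ → P ⊕ P_G^∞` which is
`2⁻ⁿ W n ⊕ 4⁻ⁿ` on the `n`-th copy of `P_G` is adjointable and equivariant. Its adjoint has dense
range because of the weights `4⁻ⁿ` alone. Its own range is dense because
`2ⁿ T' ξ = W n ξ ⊕ 2⁻ⁿ ξ` for `ξ` in the `n`-th copy, where the second term tends to zero along the
indices that carry one and the same `η` (`exists_dense_operators`).

Throughout, the fibre of a module at `x` is handled through representatives: `ip x` and `nr x` are
the inner product and the seminorm at `x`, and `Rel A g p p'` says that `g` maps the class of `p` in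
the fibre at `s g` to the class of `p'` in the fibre at `r g`.
-/

noncomputable section
open scoped ZeroAtInfty
open Topology Filter ComplexConjugate

namespace Stabilization

/-- The set of continuous sections vanishing at infinity of a family of normed fibers,
relative to a given topology on the total space of the bundle. -/
def C0Sections {Y : Type} [TopologicalSpace Y] (H : Y → Type)
    [∀ y, NormedAddCommGroup (H y)] (tE : TopologicalSpace ((y : Y) × H y)) :
    Set ((y : Y) → H y) :=
  {F | @Continuous Y ((y : Y) × H y) _ tE (fun y => ⟨y, F y⟩) ∧
    Tendsto (fun y => ‖F y‖) (cocompact Y) (nhds 0)}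

/-- A Hilbert bundle over `Y` (Definition 2.1 of the paper): a family of Hilbert spaces
`H y` together with a second countable topology on the total space such that
(i) fiberwise addition and scalar multiplication are continuous, (ii) the norm along any
continuous section vanishing at infinity is continuous, (iii) the continuous sections
vanishing at infinity fill out every fiber, and (iv) the sets `U_{F,ε}` form a base. -/
structure HilbertBundle (Y : Type) [TopologicalSpace Y] where
  H : Y → Type
  [nacg : ∀ y, NormedAddCommGroup (H y)]
  [ips : ∀ y, InnerProductSpace ℂ (H y)]
  [cpl : ∀ y, CompleteSpace (H y)]
  topE : TopologicalSpace ((y : Y) × H y)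
  secondCountable : @SecondCountableTopology ((y : Y) × H y) topE
  add_cont : @Continuous {p : ((y : Y) × H y) × ((y : Y) × H y) // p.1.1 = p.2.1}
      ((y : Y) × H y)
      (@instTopologicalSpaceSubtype _ _ (@instTopologicalSpaceProd _ _ topE topE)) topE
      (fun p => ⟨p.1.1.1, p.1.1.2 + cast (congrArg H p.2).symm p.1.2.2⟩)
  smul_cont : @Continuous (ℂ × (y : Y) × H y) ((y : Y) × H y)
      (@instTopologicalSpaceProd _ _ _ topE) topE
      (fun p => ⟨p.2.1, p.1 • p.2.2⟩)
  norm_cont : ∀ F ∈ C0Sections H topE, Continuous fun y => ‖F y‖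
  fiber_full : ∀ (y : Y) (v : H y), ∃ F ∈ C0Sections H topE, F y = v
  isBasis : @TopologicalSpace.IsTopologicalBasis ((y : Y) × H y) topE
      {S | ∃ (U : Set Y) (F : (y : Y) → H y) (ε : ℝ), IsOpen U ∧ F ∈ C0Sections H topE ∧
        0 < ε ∧ S = {e | e.1 ∈ U ∧ ‖e.2 - F e.1‖ < ε}}

attribute [instance] HilbertBundle.nacg HilbertBundle.ips HilbertBundle.cpl

/-- A Hilbert `C₀(Y)`-module structure on `P`: a right `C₀(Y)`-module action and a
`C₀(Y)`-valued inner product, complete for the norm `‖p‖ = ‖⟨p,p⟩‖^{1/2}` (completeness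
being recorded by a `CompleteSpace` instance on `P` at use sites). -/
class HilbertCzeroModule (Y : Type) [TopologicalSpace Y] (P : Type)
    [NormedAddCommGroup P] [NormedSpace ℂ P] where
  msmul : P → C₀(Y, ℂ) → P
  minner : P → P → C₀(Y, ℂ)
  msmul_add_left : ∀ (p q : P) (f : C₀(Y, ℂ)), msmul (p + q) f = msmul p f + msmul q f
  msmul_add_right : ∀ (p : P) (f g : C₀(Y, ℂ)), msmul p (f + g) = msmul p f + msmul p g
  msmul_mul : ∀ (p : P) (f g : C₀(Y, ℂ)), msmul (msmul p f) g = msmul p (f * g)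
  msmul_csmul_left : ∀ (c : ℂ) (p : P) (f : C₀(Y, ℂ)), msmul (c • p) f = c • msmul p f
  msmul_csmul_right : ∀ (c : ℂ) (p : P) (f : C₀(Y, ℂ)), msmul p (c • f) = c • msmul p f
  minner_add_right : ∀ p q r : P, minner p (q + r) = minner p q + minner p r
  minner_conj : ∀ p q : P, minner p q = star (minner q p)
  minner_csmul_right : ∀ (c : ℂ) (p q : P), minner p (c • q) = c • minner p q
  minner_msmul_right : ∀ (p q : P) (f : C₀(Y, ℂ)), minner p (msmul q f) = minner p q * f
  minner_self_re_nonneg : ∀ (p : P) (y : Y), 0 ≤ (minner p p y).re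
  minner_self_im : ∀ (p : P) (y : Y), (minner p p y).im = 0
  norm_eq : ∀ p : P, ‖p‖ = Real.sqrt ‖minner p p‖

/-- The module action, with the base space explicit. -/
def modSMul (Y : Type) [TopologicalSpace Y] {P : Type} [NormedAddCommGroup P]
    [NormedSpace ℂ P] [HilbertCzeroModule Y P] (p : P) (f : C₀(Y, ℂ)) : P :=
  HilbertCzeroModule.msmul p f

/-- The `C₀(Y)`-valued inner product, with the base space explicit. -/
def modIP (Y : Type) [TopologicalSpace Y] {P : Type} [NormedAddCommGroup P]
    [NormedSpace ℂ P] [HilbertCzeroModule Y P] (p q : P) : C₀(Y, ℂ) :=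
  HilbertCzeroModule.minner p q

variable (Y : Type) [TopologicalSpace Y]
variable (P : Type) [NormedAddCommGroup P] [NormedSpace ℂ P] [HilbertCzeroModule Y P]

/-- `I_y P`: the closed submodule generated by products `p·f` with `f(y) = 0`. -/
def fiberIdeal (y : Y) : Submodule ℂ P :=
  Submodule.span ℂ {x | ∃ (f : C₀(Y, ℂ)) (p : P), f y = 0 ∧ x = modSMul Y p f}

/-- The fiber `P_y = P / I_y P` of the Hilbert bundle associated to `P`. -/
abbrev Fib (y : Y) : Type := P ⧸ fiberIdeal Y P y

/-- `p ↦ p̂(y)`, the image of `p` in the fiber `P_y`. -/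
def fibMk (y : Y) : P → Fib Y P y := Submodule.Quotient.mk

/-- The fiber norm of `p̂(y)`, computed from a representative. -/
def fibNormRep (y : Y) (p : P) : ℝ := Real.sqrt ((modIP Y p p) y).re

/-- The norm on the fiber `P_y` (the common value of `fibNormRep` over representatives). -/
def fibNormQ (y : Y) (h : Fib Y P y) : ℝ :=
  sInf {r | ∃ p : P, h = fibMk Y P y p ∧ r = fibNormRep Y P y p}

/-- The total space `E_P = ⊔_y P_y` of the bundle associated to `P`. -/
abbrev TotalP : Type := (y : Y) × Fib Y P y

/-- The basic sets `U_{p,ε}` of the bundle `E_P`. -/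
def basisP : Set (Set (TotalP Y P)) :=
  {S | ∃ (U : Set Y) (p : P) (ε : ℝ), IsOpen U ∧ 0 < ε ∧
    S = {e : TotalP Y P | e.1 ∈ U ∧ fibNormQ Y P e.1 (e.2 - fibMk Y P e.1 p) < ε}}

/-- The topology on `E_P` generated by the sets `U_{p,ε}`. -/
def topEP : TopologicalSpace (TotalP Y P) := TopologicalSpace.generateFrom (basisP Y P)

/-- The continuous sections of `E_P` vanishing at infinity. -/
def C0SectionsP : Set ((y : Y) → Fib Y P y) :=
  {F | @Continuous Y (TotalP Y P) _ (topEP Y P) (fun y => ⟨y, F y⟩) ∧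
    Tendsto (fun y => fibNormQ Y P y (F y)) (cocompact Y) (nhds 0)}

/-- The section `p̂` associated to `p ∈ P`. -/
def hatSec (p : P) : (y : Y) → Fib Y P y := fun y => fibMk Y P y p

/-- Transport between fibers of `E_P` over equal base points. -/
def fcast {y z : Y} (h : y = z) : Fib Y P y → Fib Y P z := fun v => h ▸ v


variable (Y : Type) [TopologicalSpace Y]

/-- A second countable locally compact Hausdorff proper topological groupoid with unit
space `Y`.  Multiplication is recorded as a total map which is only constrained on
composable pairs. -/
structure LCGroupoid where
  G : Type
  [topG : TopologicalSpace G]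
  [t2G : T2Space G]
  [lcG : LocallyCompactSpace G]
  [scG : SecondCountableTopology G]
  [mG : MeasurableSpace G]
  [bG : BorelSpace G]
  r : G → Y
  s : G → Y
  unit : Y → G
  mul : G → G → G
  inv : G → G
  unit_embedding : Topology.IsEmbedding unit
  r_unit : ∀ y, r (unit y) = y
  s_unit : ∀ y, s (unit y) = y
  r_cont : Continuous r
  s_cont : Continuous s
  inv_cont : Continuous inv
  mul_cont : Continuous fun p : {p : G × G // s p.1 = r p.2} => mul p.1.1 p.1.2
  r_mul : ∀ g h, s g = r h → r (mul g h) = r g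
  s_mul : ∀ g h, s g = r h → s (mul g h) = s h
  mul_assoc : ∀ g h k, s g = r h → s h = r k → mul (mul g h) k = mul g (mul h k)
  mul_unit : ∀ g, mul g (unit (s g)) = g
  unit_mul : ∀ g, mul (unit (r g)) g = g
  r_inv : ∀ g, r (inv g) = s g
  s_inv : ∀ g, s (inv g) = r g
  mul_inv : ∀ g, mul g (inv g) = unit (r g)
  inv_mul : ∀ g, mul (inv g) g = unit (s g)
  proper : IsProperMap fun g => (r g, s g)

attribute [instance] LCGroupoid.topG LCGroupoid.t2G LCGroupoid.lcG LCGroupoid.scG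
  LCGroupoid.mG LCGroupoid.bG

variable (Gp : LCGroupoid Y)

/-- A left Haar system `{λ^y}` for the groupoid `Gp`:  `λ^y` is a Radon-type measure
concentrated on `G^y = r⁻¹(y)` with support `G^y`, varying continuously, and
left invariant. -/
structure HaarSystem where
  lam : Y → MeasureTheory.Measure Gp.G
  concentrated : ∀ y, lam y ((Gp.r ⁻¹' {y})ᶜ) = 0
  full : ∀ (y : Y) (U : Set Gp.G), IsOpen U → (U ∩ Gp.r ⁻¹' {y}).Nonempty → lam y U ≠ 0
  finiteOnCompacts : ∀ (y : Y) (K : Set Gp.G), IsCompact K → lam y K ≠ ⊤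
  integral_continuous : ∀ F : Gp.G → ℂ, Continuous F → HasCompactSupport F →
    Continuous fun y => ∫ g, F g ∂(lam y)
  left_invariant : ∀ (g₀ : Gp.G) (F : Gp.G → ℂ), Continuous F → HasCompactSupport F →
    ∫ g, F (Gp.mul g₀ g) ∂(lam (Gp.s g₀)) = ∫ g, F g ∂(lam (Gp.r g₀))

/-- Continuous compactly supported functions on the groupoid `Gp`. -/
def CcFun : Type := {F : Gp.G → ℂ // Continuous F ∧ HasCompactSupport F}


section GroupoidActions

variable {Y : Type} [TopologicalSpace Y] (Gp : LCGroupoid Y)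
variable (P : Type) [NormedAddCommGroup P] [NormedSpace ℂ P] [HilbertCzeroModule Y P]

/-- A continuous, unitary left action of the groupoid `Gp` on the Hilbert bundle `E_P`
associated to the Hilbert `C₀(Y)`-module `P`: this is the datum making `P` a
`G`-Hilbert module. -/
structure GAction where
  act : (g : Gp.G) → Fib Y P (Gp.s g) → Fib Y P (Gp.r g)
  act_add : ∀ (g : Gp.G) (v w : Fib Y P (Gp.s g)), act g (v + w) = act g v + act g w
  act_csmul : ∀ (g : Gp.G) (c : ℂ) (v : Fib Y P (Gp.s g)), act g (c • v) = c • act g v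
  act_norm : ∀ (g : Gp.G) (v : Fib Y P (Gp.s g)),
    fibNormQ Y P (Gp.r g) (act g v) = fibNormQ Y P (Gp.s g) v
  act_surjective : ∀ g : Gp.G, Function.Surjective (act g)
  act_unit : ∀ (y : Y) (v : Fib Y P y),
    act (Gp.unit y) (fcast Y P (Gp.s_unit y).symm v) = fcast Y P (Gp.r_unit y).symm v
  act_mul : ∀ (g h : Gp.G) (hc : Gp.s g = Gp.r h) (v : Fib Y P (Gp.s h)),
    act (Gp.mul g h) (fcast Y P (Gp.s_mul g h hc).symm v) =
      fcast Y P (Gp.r_mul g h hc).symm (act g (fcast Y P hc.symm (act h v)))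
  act_cont : @Continuous {q : Gp.G × TotalP Y P // Gp.s q.1 = q.2.1} (TotalP Y P)
    (@instTopologicalSpaceSubtype _ _ (@instTopologicalSpaceProd _ _ _ (topEP Y P)))
    (topEP Y P)
    (fun q => ⟨Gp.r q.1.1, act q.1.1 (fcast Y P q.2.symm q.1.2.2)⟩)

variable {Gp P}
variable {Q : Type} [NormedAddCommGroup Q] [NormedSpace ℂ Q] [HilbertCzeroModule Y Q]

/-- A `G`-equivariant unitary isomorphism of `G`-Hilbert modules:  a bijective,
`ℂ`-linear, `C₀(Y)`-linear, inner-product preserving map intertwining the `G`-actions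
on the associated Hilbert bundles. -/
def IsGEquivariantUnitary (T : P → Q) (AP : GAction Gp P) (AQ : GAction Gp Q) : Prop :=
  Function.Bijective T ∧
  (∀ p p' : P, T (p + p') = T p + T p') ∧
  (∀ (c : ℂ) (p : P), T (c • p) = c • T p) ∧
  (∀ (p : P) (f : C₀(Y, ℂ)), T (modSMul Y p f) = modSMul Y (T p) f) ∧
  (∀ p p' : P, modIP Y (T p) (T p') = modIP Y p p') ∧
  (∀ (g : Gp.G) (p p' : P),
      AP.act g (fibMk Y P (Gp.s g) p) = fibMk Y P (Gp.r g) p' →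
      AQ.act g (fibMk Y Q (Gp.s g) (T p)) = fibMk Y Q (Gp.r g) (T p'))

/-- Equivalence of `G`-Hilbert modules: existence of a `G`-equivariant unitary. -/
def GEquiv (AP : GAction Gp P) (AQ : GAction Gp Q) : Prop :=
  ∃ T : P → Q, IsGEquivariantUnitary T AP AQ

end GroupoidActions

section ModuleConstructions

variable {Y : Type} [TopologicalSpace Y] (Gp : LCGroupoid Y)

/-- Data exhibiting a Hilbert `C₀(Y)`-module `PG` as the completion `P_G` of the
pre-Hilbert `C₀(Y)`-module `C_c(G)`, with module action `F·f = F·(f∘r)` and inner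
product `⟨F₁,F₂⟩(y) = ∫_{G^y} conj F₁ · F₂ dλ^y`. -/
structure PGData (hs : HaarSystem Y Gp) (PG : Type) [NormedAddCommGroup PG]
    [NormedSpace ℂ PG] [HilbertCzeroModule Y PG] where
  emb : CcFun Y Gp → PG
  emb_add : ∀ F₁ F₂ F₃ : CcFun Y Gp, F₃.1 = F₁.1 + F₂.1 → emb F₃ = emb F₁ + emb F₂
  emb_csmul : ∀ (c : ℂ) (F₁ F₃ : CcFun Y Gp), F₃.1 = c • F₁.1 → emb F₃ = c • emb F₁
  emb_msmul : ∀ (F₁ F₃ : CcFun Y Gp) (f : C₀(Y, ℂ)),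
    F₃.1 = (fun g => F₁.1 g * f (Gp.r g)) → emb F₃ = modSMul Y (emb F₁) f
  emb_inner : ∀ (F₁ F₂ : CcFun Y Gp) (y : Y),
    modIP Y (emb F₁) (emb F₂) y = ∫ g, conj (F₁.1 g) * F₂.1 g ∂(hs.lam y)
  emb_dense : ∀ (p : PG) (ε : ℝ), 0 < ε → ∃ F : CcFun Y Gp, ‖p - emb F‖ < ε

variable {Gp}

/-- The natural left translation action of `G` on `L²(G) = E_{P_G}`, characterized on
the dense image of `C_c(G)` by `(g·ξ)(h) = ξ(g⁻¹h)` for `h ∈ G^{r(g)}`. -/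
def IsNaturalPGAction {hs : HaarSystem Y Gp} {PG : Type} [NormedAddCommGroup PG]
    [NormedSpace ℂ PG] [HilbertCzeroModule Y PG] (d : PGData Gp hs PG)
    (A : GAction Gp PG) : Prop :=
  ∀ (g : Gp.G) (F F' : CcFun Y Gp),
    (∀ h : Gp.G, Gp.r h = Gp.r g → F'.1 h = F.1 (Gp.mul (Gp.inv g) h)) →
    A.act g (fibMk Y PG (Gp.s g) (d.emb F)) = fibMk Y PG (Gp.r g) (d.emb F')

end ModuleConstructions

section TensorSum

/-- Data exhibiting `R` as the interior tensor product `P ⊗_{C₀(Y)} Q` of two Hilbert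
`C₀(Y)`-modules: a balanced bilinear map with dense span satisfying
`⟨p₁⊗q₁, p₂⊗q₂⟩ = ⟨p₁,p₂⟩⟨q₁,q₂⟩`. -/
structure TensorData (Y : Type) [TopologicalSpace Y] (P Q R : Type)
    [NormedAddCommGroup P] [NormedSpace ℂ P] [HilbertCzeroModule Y P]
    [NormedAddCommGroup Q] [NormedSpace ℂ Q] [HilbertCzeroModule Y Q]
    [NormedAddCommGroup R] [NormedSpace ℂ R] [HilbertCzeroModule Y R] where
  t : P → Q → R
  t_add_left : ∀ (p p' : P) (q : Q), t (p + p') q = t p q + t p' q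
  t_add_right : ∀ (p : P) (q q' : Q), t p (q + q') = t p q + t p q'
  t_csmul_left : ∀ (c : ℂ) (p : P) (q : Q), t (c • p) q = c • t p q
  t_csmul_right : ∀ (c : ℂ) (p : P) (q : Q), t p (c • q) = c • t p q
  t_msmul_left : ∀ (p : P) (q : Q) (f : C₀(Y, ℂ)), t (modSMul Y p f) q = modSMul Y (t p q) f
  t_msmul_right : ∀ (p : P) (q : Q) (f : C₀(Y, ℂ)), t p (modSMul Y q f) = modSMul Y (t p q) f
  t_inner : ∀ (p p' : P) (q q' : Q),
    modIP Y (t p q) (t p' q') = modIP Y p p' * modIP Y q q'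
  t_dense : ∀ (x : R) (ε : ℝ), 0 < ε →
    ∃ (n : ℕ) (ps : Fin n → P) (qs : Fin n → Q), ‖x - ∑ i, t (ps i) (qs i)‖ < ε

/-- Data exhibiting `S` as the Hilbert `C₀(Y)`-module direct sum `P ⊕ Q`. -/
structure SumData (Y : Type) [TopologicalSpace Y] (P Q S : Type)
    [NormedAddCommGroup P] [NormedSpace ℂ P] [HilbertCzeroModule Y P]
    [NormedAddCommGroup Q] [NormedSpace ℂ Q] [HilbertCzeroModule Y Q]
    [NormedAddCommGroup S] [NormedSpace ℂ S] [HilbertCzeroModule Y S] where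
  inl : P → S
  inr : Q → S
  inl_add : ∀ p p' : P, inl (p + p') = inl p + inl p'
  inr_add : ∀ q q' : Q, inr (q + q') = inr q + inr q'
  inl_csmul : ∀ (c : ℂ) (p : P), inl (c • p) = c • inl p
  inr_csmul : ∀ (c : ℂ) (q : Q), inr (c • q) = c • inr q
  inl_msmul : ∀ (p : P) (f : C₀(Y, ℂ)), inl (modSMul Y p f) = modSMul Y (inl p) f
  inr_msmul : ∀ (q : Q) (f : C₀(Y, ℂ)), inr (modSMul Y q f) = modSMul Y (inr q) f
  inner_ll : ∀ p p' : P, modIP Y (inl p) (inl p') = modIP Y p p'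
  inner_rr : ∀ q q' : Q, modIP Y (inr q) (inr q') = modIP Y q q'
  inner_lr : ∀ (p : P) (q : Q), modIP Y (inl p) (inr q) = 0
  total : ∀ x : S, ∃ (p : P) (q : Q), x = inl p + inr q

/-- Data exhibiting `S` as the Hilbert `C₀(Y)`-module direct sum `⊕_{i=1}^∞ P i` of a
sequence of Hilbert `C₀(Y)`-modules: the module of sequences `{p_i}`, `p_i ∈ P i`, with
`Σ_i ⟨p_i,p_i⟩` convergent in `C₀(Y)`. -/
structure InftySumData (Y : Type) [TopologicalSpace Y] (Pf : ℕ → Type) (S : Type)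
    [∀ i, NormedAddCommGroup (Pf i)] [∀ i, NormedSpace ℂ (Pf i)]
    [∀ i, HilbertCzeroModule Y (Pf i)]
    [NormedAddCommGroup S] [NormedSpace ℂ S] [HilbertCzeroModule Y S] where
  proj : (i : ℕ) → S → Pf i
  proj_add : ∀ (i : ℕ) (x x' : S), proj i (x + x') = proj i x + proj i x'
  proj_csmul : ∀ (i : ℕ) (c : ℂ) (x : S), proj i (c • x) = c • proj i x
  proj_msmul : ∀ (i : ℕ) (x : S) (f : C₀(Y, ℂ)),
    proj i (modSMul Y x f) = modSMul Y (proj i x) f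
  proj_inner : ∀ x x' : S, HasSum (fun i => modIP Y (proj i x) (proj i x')) (modIP Y x x')
  proj_injective : ∀ x x' : S, (∀ i, proj i x = proj i x') → x = x'
  proj_surjective : ∀ u : (i : ℕ) → Pf i, Summable (fun i => modIP Y (u i) (u i)) →
    ∃ x : S, ∀ i, proj i x = u i

variable {Y : Type} [TopologicalSpace Y] {Gp : LCGroupoid Y}
variable {P Q R S : Type}
  [NormedAddCommGroup P] [NormedSpace ℂ P] [HilbertCzeroModule Y P]
  [NormedAddCommGroup Q] [NormedSpace ℂ Q] [HilbertCzeroModule Y Q]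
  [NormedAddCommGroup R] [NormedSpace ℂ R] [HilbertCzeroModule Y R]
  [NormedAddCommGroup S] [NormedSpace ℂ S] [HilbertCzeroModule Y S]

/-- The diagonal `G`-action on a tensor product `P ⊗_{C₀(Y)} Q`. -/
def IsDiagonalAction (td : TensorData Y P Q R) (AP : GAction Gp P) (AQ : GAction Gp Q)
    (AR : GAction Gp R) : Prop :=
  ∀ (g : Gp.G) (p p' : P) (q q' : Q),
    AP.act g (fibMk Y P (Gp.s g) p) = fibMk Y P (Gp.r g) p' →
    AQ.act g (fibMk Y Q (Gp.s g) q) = fibMk Y Q (Gp.r g) q' →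
    AR.act g (fibMk Y R (Gp.s g) (td.t p q)) = fibMk Y R (Gp.r g) (td.t p' q')

/-- The coordinatewise `G`-action on a direct sum `P ⊕ Q`. -/
def IsCoordinateSumAction (sd : SumData Y P Q S) (AP : GAction Gp P) (AQ : GAction Gp Q)
    (AS : GAction Gp S) : Prop :=
  (∀ (g : Gp.G) (p p' : P),
    AP.act g (fibMk Y P (Gp.s g) p) = fibMk Y P (Gp.r g) p' →
    AS.act g (fibMk Y S (Gp.s g) (sd.inl p)) = fibMk Y S (Gp.r g) (sd.inl p')) ∧
  (∀ (g : Gp.G) (q q' : Q),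
    AQ.act g (fibMk Y Q (Gp.s g) q) = fibMk Y Q (Gp.r g) q' →
    AS.act g (fibMk Y S (Gp.s g) (sd.inr q)) = fibMk Y S (Gp.r g) (sd.inr q'))

/-- The coordinatewise `G`-action on an infinite direct sum `⊕_{i=1}^∞ P i`. -/
def IsCoordinateInftyAction {Pf : ℕ → Type} [∀ i, NormedAddCommGroup (Pf i)]
    [∀ i, NormedSpace ℂ (Pf i)] [∀ i, HilbertCzeroModule Y (Pf i)]
    (d : InftySumData Y Pf S) (Af : (i : ℕ) → GAction Gp (Pf i))
    (AS : GAction Gp S) : Prop :=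
  ∀ (g : Gp.G) (x x' : S),
    AS.act g (fibMk Y S (Gp.s g) x) = fibMk Y S (Gp.r g) x' →
    ∀ i, (Af i).act g (fibMk Y (Pf i) (Gp.s g) (d.proj i x)) =
      fibMk Y (Pf i) (Gp.r g) (d.proj i x')

end TensorSum

set_option linter.unusedSectionVars false

/-! ### Pointwise inner products and seminorms of a Hilbert `C₀`-module -/

section Pointwise

variable {X : Type} [TopologicalSpace X]

/-- The `C₀`-function given by a compactly supported continuous function. -/
def ofCc (f : X → ℂ) (hf : Continuous f) (hc : HasCompactSupport f) : C₀(X, ℂ) :=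
  ⟨⟨f, hf⟩, hc.is_zero_at_infty⟩

@[simp] lemma ofCc_apply (f : X → ℂ) (hf : Continuous f) (hc : HasCompactSupport f) (x : X) :
    ofCc f hf hc x = f x := rfl

/-- Composition of a `C₀`-function with a continuous function fixing the origin. -/
def compC0 (φ : ℂ → ℂ) (hφ : Continuous φ) (h0 : φ 0 = 0) (f : C₀(X, ℂ)) : C₀(X, ℂ) :=
  ⟨⟨fun x => φ (f x), hφ.comp f.continuous⟩, by
    have := (hφ.tendsto 0).comp f.zero_at_infty'
    rw [h0] at this
    exact this⟩

@[simp] lemma compC0_apply (φ : ℂ → ℂ) (hφ : Continuous φ) (h0 : φ 0 = 0) (f : C₀(X, ℂ)) (x : X) :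
    compC0 φ hφ h0 f x = φ (f x) := rfl

lemma C0_norm_le {f : C₀(X, ℂ)} {c : ℝ} (hc : 0 ≤ c) (h : ∀ x, ‖f x‖ ≤ c) : ‖f‖ ≤ c := by
  rw [← ZeroAtInftyContinuousMap.norm_toBCF_eq_norm]
  exact (BoundedContinuousFunction.norm_le hc).2 h

lemma C0_apply_le (f : C₀(X, ℂ)) (x : X) : ‖f x‖ ≤ ‖f‖ := by
  rw [← ZeroAtInftyContinuousMap.norm_toBCF_eq_norm]
  exact f.toBCF.norm_coe_le_norm x

variable {E : Type} [NormedAddCommGroup E] [NormedSpace ℂ E] [HilbertCzeroModule X E]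

/-- The value at `x` of the `C₀(X)`-valued inner product: a positive semidefinite form on `E`. -/
def ip (x : X) (p q : E) : ℂ := modIP X p q x

/-- The seminorm `‖p̂(x)‖` attached to `ip x`. -/
def nr (x : X) (p : E) : ℝ := Real.sqrt (ip x p p).re

lemma ip_add_right (x : X) (p q r : E) : ip x p (q + r) = ip x p q + ip x p r := by
  simp only [ip, modIP, HilbertCzeroModule.minner_add_right, ZeroAtInftyContinuousMap.add_apply]

lemma ip_smul_right (x : X) (c : ℂ) (p q : E) : ip x p (c • q) = c * ip x p q := by
  simp only [ip, modIP, HilbertCzeroModule.minner_csmul_right,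
    ZeroAtInftyContinuousMap.smul_apply, smul_eq_mul]

lemma ip_conj (x : X) (p q : E) : conj (ip x q p) = ip x p q := by
  simp only [ip, modIP]
  rw [HilbertCzeroModule.minner_conj p q, ZeroAtInftyContinuousMap.star_apply]
  rfl

lemma ip_msmul_right (x : X) (p q : E) (f : C₀(X, ℂ)) :
    ip x p (modSMul X q f) = ip x p q * f x := by
  simp only [ip, modIP, modSMul, HilbertCzeroModule.minner_msmul_right,
    ZeroAtInftyContinuousMap.mul_apply]

lemma ip_add_left (x : X) (p q r : E) : ip x (p + q) r = ip x p r + ip x q r := by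
  rw [← ip_conj, ip_add_right, map_add, ip_conj, ip_conj]

lemma ip_smul_left (x : X) (c : ℂ) (p q : E) : ip x (c • p) q = conj c * ip x p q := by
  rw [← ip_conj, ip_smul_right, map_mul, ip_conj]

lemma ip_msmul_left (x : X) (p q : E) (f : C₀(X, ℂ)) :
    ip x (modSMul X p f) q = conj (f x) * ip x p q := by
  rw [← ip_conj, ip_msmul_right, map_mul, ip_conj, mul_comm]

lemma ip_neg_right (x : X) (p q : E) : ip x p (-q) = -ip x p q := by
  rw [← neg_one_smul ℂ q, ip_smul_right, neg_one_mul]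

lemma ip_neg_left (x : X) (p q : E) : ip x (-p) q = -ip x p q := by
  rw [← neg_one_smul ℂ p, ip_smul_left]; simp

lemma ip_sub_right (x : X) (p q r : E) : ip x p (q - r) = ip x p q - ip x p r := by
  rw [sub_eq_add_neg, ip_add_right, ip_neg_right, sub_eq_add_neg]

lemma ip_sub_left (x : X) (p q r : E) : ip x (p - q) r = ip x p r - ip x q r := by
  rw [sub_eq_add_neg, ip_add_left, ip_neg_left, sub_eq_add_neg]

lemma ip_zero_right (x : X) (p : E) : ip x p 0 = 0 := by
  rw [← zero_smul ℂ (0 : E), ip_smul_right, zero_mul]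

lemma ip_zero_left (x : X) (p : E) : ip x 0 p = 0 := by
  rw [← ip_conj, ip_zero_right, map_zero]

lemma ip_sum_right {ι : Type*} (s : Finset ι) (x : X) (p : E) (q : ι → E) :
    ip x p (∑ i ∈ s, q i) = ∑ i ∈ s, ip x p (q i) := by
  classical
  induction s using Finset.induction_on with
  | empty => simp [ip_zero_right]
  | insert a s ha ih => rw [Finset.sum_insert ha, Finset.sum_insert ha, ip_add_right, ih]

variable (X E) in
/-- The positive semidefinite form at `x`, packaged for the Cauchy–Schwarz inequality. -/
@[reducible] def preCore (x : X) : PreInnerProductSpace.Core ℂ E where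
  inner := ip x
  conj_inner_symm p q := ip_conj x p q
  re_inner_nonneg p := HilbertCzeroModule.minner_self_re_nonneg p x
  add_left p q r := ip_add_left x p q r
  smul_left p q c := ip_smul_left x c p q

lemma nr_nonneg (x : X) (p : E) : 0 ≤ nr x p := Real.sqrt_nonneg _

lemma nr_sq (x : X) (p : E) : nr x p ^ 2 = (ip x p p).re :=
  Real.sq_sqrt (HilbertCzeroModule.minner_self_re_nonneg p x)

lemma ip_self (x : X) (p : E) : ip x p p = ((nr x p ^ 2 : ℝ) : ℂ) := by
  rw [nr_sq]
  exact Complex.ext rfl (HilbertCzeroModule.minner_self_im p x)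

lemma norm_ip_self (x : X) (p : E) : ‖ip x p p‖ = nr x p ^ 2 := by
  rw [ip_self, Complex.norm_real, Real.norm_of_nonneg (sq_nonneg _)]

lemma norm_ip_le (x : X) (p q : E) : ‖ip x p q‖ ≤ nr x p * nr x q :=
  @InnerProductSpace.Core.norm_inner_le_norm ℂ E _ _ _ (preCore X E x) p q

lemma nr_add_le (x : X) (p q : E) : nr x (p + q) ≤ nr x p + nr x q :=
  @norm_add_le E (@InnerProductSpace.Core.toSeminormedAddCommGroup ℂ E _ _ _
    (preCore X E x)).toSeminormedAddGroup p q

lemma nr_smul (x : X) (c : ℂ) (p : E) : nr x (c • p) = ‖c‖ * nr x p := by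
  rw [← sq_eq_sq₀ (nr_nonneg _ _) (mul_nonneg (norm_nonneg _) (nr_nonneg _ _)),
    ← norm_ip_self, ip_smul_right, ip_smul_left, norm_mul, norm_mul, norm_ip_self,
    Complex.norm_conj]
  ring

lemma nr_msmul (x : X) (p : E) (f : C₀(X, ℂ)) : nr x (modSMul X p f) = ‖f x‖ * nr x p := by
  rw [← sq_eq_sq₀ (nr_nonneg _ _) (mul_nonneg (norm_nonneg _) (nr_nonneg _ _)),
    ← norm_ip_self, ip_msmul_right, ip_msmul_left, norm_mul, norm_mul, norm_ip_self,
    Complex.norm_conj]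
  ring

lemma nr_neg (x : X) (p : E) : nr x (-p) = nr x p := by
  rw [← neg_one_smul ℂ p, nr_smul]; simp

lemma nr_zero (x : X) : nr x (0 : E) = 0 := by
  rw [← zero_smul ℂ (0 : E), nr_smul]; simp

lemma nr_sub_comm (x : X) (p q : E) : nr x (p - q) = nr x (q - p) := by
  rw [← nr_neg, neg_sub]

lemma nr_sub_le (x : X) (p q r : E) : nr x (p - r) ≤ nr x (p - q) + nr x (q - r) := by
  have := nr_add_le x (p - q) (q - r)
  rwa [sub_add_sub_cancel] at this

lemma nr_le_add_sub (x : X) (p q : E) : nr x p ≤ nr x q + nr x (p - q) := by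
  have := nr_add_le x q (p - q)
  rwa [add_sub_cancel] at this

lemma nr_sum_le {ι : Type*} (s : Finset ι) (x : X) (q : ι → E) :
    nr x (∑ i ∈ s, q i) ≤ ∑ i ∈ s, nr x (q i) := by
  classical
  induction s using Finset.induction_on with
  | empty => simp [nr_zero]
  | insert a s ha ih =>
    rw [Finset.sum_insert ha, Finset.sum_insert ha]
    exact (nr_add_le _ _ _).trans (by gcongr)

lemma nr_le_norm (x : X) (p : E) : nr x p ≤ ‖p‖ := by
  rw [HilbertCzeroModule.norm_eq (Y := X) p]
  exact Real.sqrt_le_sqrt ((Complex.re_le_norm _).trans (C0_apply_le _ x))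

variable (X) in
lemma norm_le_of_nr_le {p : E} {c : ℝ} (hc : 0 ≤ c) (h : ∀ x : X, nr x p ≤ c) : ‖p‖ ≤ c := by
  rw [HilbertCzeroModule.norm_eq (Y := X) p]
  refine Real.sqrt_le_iff.2 ⟨hc, C0_norm_le (sq_nonneg c) fun x => ?_⟩
  have : ‖ip x p p‖ ≤ c ^ 2 := by
    rw [norm_ip_self]
    exact pow_le_pow_left₀ (nr_nonneg _ _) (h x) 2
  exact this

variable (X) in
lemma eq_of_nr_sub {p q : E} (h : ∀ x : X, nr x (p - q) = 0) : p = q :=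
  sub_eq_zero.1 <| norm_le_zero_iff.1 <| norm_le_of_nr_le X le_rfl fun x => (h x).le

lemma continuous_ip (p q : E) : Continuous fun x : X => ip x p q := (modIP X p q).continuous

lemma continuous_nr (p : E) : Continuous fun x : X => nr x p :=
  Real.continuous_sqrt.comp (Complex.continuous_re.comp (continuous_ip p p))

lemma ip_eq_of_nr_sub_right {x : X} {q q' : E} (h : nr x (q - q') = 0) (p : E) :
    ip x p q = ip x p q' := by
  have := norm_ip_le x p (q - q')
  rw [h, mul_zero, ip_sub_right] at this
  exact sub_eq_zero.1 (norm_le_zero_iff.1 this)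

lemma ip_eq_of_nr_sub_left {x : X} {q q' : E} (h : nr x (q - q') = 0) (p : E) :
    ip x q p = ip x q' p := by
  rw [← ip_conj, ip_eq_of_nr_sub_right h, ip_conj]

lemma nr_eq_of_nr_sub {x : X} {q q' : E} (h : nr x (q - q') = 0) : nr x q = nr x q' := by
  have h1 := nr_le_add_sub x q q'
  have h2 := nr_le_add_sub x q' q
  rw [nr_sub_comm] at h2
  linarith

/-- If `⟨p, z⟩(x)` is bounded by `c ‖p̂(x)‖`, then `‖ẑ(x)‖ ≤ c`; it suffices to test on a
family of dense range. -/
lemma nr_le_of_dual {ι : Type*} (D : ι → E) (hD : ∀ (q : E) (ε : ℝ), 0 < ε → ∃ i, ‖q - D i‖ < ε)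
    {x : X} {z : E} {c : ℝ} (hc : 0 ≤ c) (h : ∀ i, ‖ip x (D i) z‖ ≤ c * nr x (D i)) :
    nr x z ≤ c := by
  have key : ∀ ε : ℝ, 0 < ε → nr x z * nr x z ≤ c * nr x z + ε * (nr x z + c) := by
    intro ε hε
    obtain ⟨i, hi⟩ := hD z ε hε
    have hi' : nr x (z - D i) ≤ ε := (nr_le_norm x _).trans hi.le
    have h1 : ip x z z = ip x (D i) z + ip x (z - D i) z := by
      rw [ip_sub_left]; ring
    have h2 : nr x z ^ 2 ≤ ‖ip x (D i) z‖ + ‖ip x (z - D i) z‖ := by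
      rw [← norm_ip_self, h1]; exact norm_add_le _ _
    have h3 := norm_ip_le x (z - D i) z
    have h4 : nr x (D i) ≤ nr x z + ε := by
      have := nr_le_add_sub x (D i) z
      rw [nr_sub_comm] at this
      linarith
    have h5 := mul_le_mul_of_nonneg_right hi' (nr_nonneg x z)
    have h6 := mul_le_mul_of_nonneg_left h4 hc
    nlinarith [h i]
  have h0 := nr_nonneg x z
  have key2 : nr x z * nr x z ≤ c * nr x z := by
    refine le_of_forall_pos_le_add fun δ hδ => ?_
    refine (key (δ / (nr x z + c + 1)) (by positivity)).trans ?_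
    gcongr
    rw [div_mul_eq_mul_div, div_le_iff₀ (by positivity)]
    nlinarith
  by_contra hlt
  push Not at hlt
  nlinarith

/-- A family of functionals on a family `D` of dense range that can be approximated, uniformly over
the unit balls of all fibres, by inner products with elements of `E`, is the inner product with
an element of `E`. -/
lemma exists_represent [CompleteSpace E] {ι : Type*} (D : ι → E)
    (hD : ∀ (q : E) (ε : ℝ), 0 < ε → ∃ i, ‖q - D i‖ < ε) (l : ι → X → ℂ)
    (h : ∀ ε : ℝ, 0 < ε → ∃ v : E, ∀ i x, ‖ip x (D i) v - l i x‖ ≤ ε * nr x (D i)) :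
    ∃ v : E, ∀ i x, ip x (D i) v = l i x := by
  choose! v hv using h
  have hpos : ∀ n : ℕ, (0 : ℝ) < 1 / ((n : ℝ) + 1) := fun n => Nat.one_div_pos_of_nat
  set u : ℕ → E := fun n => v (1 / ((n : ℝ) + 1)) with hu
  have hu' : ∀ n i x, ‖ip x (D i) (u n) - l i x‖ ≤ 1 / ((n : ℝ) + 1) * nr x (D i) :=
    fun n i x => hv _ (hpos n) i x
  have hdist : ∀ n m : ℕ, ‖u n - u m‖ ≤ 1 / ((n : ℝ) + 1) + 1 / ((m : ℝ) + 1) := by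
    intro n m
    have h0 : 0 ≤ 1 / ((n : ℝ) + 1) + 1 / ((m : ℝ) + 1) := (add_pos (hpos n) (hpos m)).le
    refine norm_le_of_nr_le X h0 fun x => nr_le_of_dual D hD h0 fun i => ?_
    have : ip x (D i) (u n - u m) =
        (ip x (D i) (u n) - l i x) - (ip x (D i) (u m) - l i x) := by
      rw [ip_sub_right]; ring
    rw [this, add_mul]
    exact (norm_sub_le _ _).trans (add_le_add (hu' n i x) (hu' m i x))
  have hlim := tendsto_one_div_add_atTop_nhds_zero_nat (𝕜 := ℝ)
  have hcau : CauchySeq u := by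
    refine cauchySeq_of_le_tendsto_0 (fun N : ℕ => 2 * (1 / ((N : ℝ) + 1))) ?_ ?_
    · intro n m N hn hm
      rw [dist_eq_norm]
      refine (hdist n m).trans ?_
      have h1 := Nat.one_div_le_one_div (α := ℝ) hn
      have h2 := Nat.one_div_le_one_div (α := ℝ) hm
      linarith
    · simpa using hlim.const_mul 2
  obtain ⟨w, hw⟩ := cauchySeq_tendsto_of_complete hcau
  refine ⟨w, fun i x => ?_⟩
  have h1 : Tendsto (fun n => ‖w - u n‖) atTop (nhds 0) := by
    have := (tendsto_const_nhds (x := w)).sub hw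
    simpa using this.norm
  have h2 : Tendsto (fun n : ℕ => nr x (D i) * ‖w - u n‖ + 1 / ((n : ℝ) + 1) * nr x (D i)) atTop
      (nhds 0) := by
    simpa using (h1.const_mul (nr x (D i))).add (hlim.mul_const (nr x (D i)))
  have h3 : ∀ n, ‖ip x (D i) w - l i x‖ ≤
      nr x (D i) * ‖w - u n‖ + 1 / ((n : ℝ) + 1) * nr x (D i) := by
    intro n
    have : ip x (D i) w - l i x = ip x (D i) (w - u n) + (ip x (D i) (u n) - l i x) := by
      rw [ip_sub_right]; ring
    rw [this]
    refine (norm_add_le _ _).trans (add_le_add ?_ (hu' n i x))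
    exact (norm_ip_le _ _ _).trans
      (mul_le_mul_of_nonneg_left (nr_le_norm _ _) (nr_nonneg _ _))
  exact sub_eq_zero.1 (norm_le_zero_iff.1 (ge_of_tendsto' h2 h3))

/-! ### The fibres `E / I_x E` -/

/-- The closed submodule of elements with `⟨p, p⟩(x) = 0` is algebraically `I_x E`:  such a `p`
factors as `q · f` with `f = ⟨p, p⟩^{1/4}`. -/
lemma mem_fiberIdeal_iff [CompleteSpace E] (x : X) (p : E) :
    p ∈ fiberIdeal X E x ↔ nr x p = 0 := by
  constructor
  · intro hp
    have : ∀ z, ip x z p = 0 := by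
      refine Submodule.span_induction (p := fun p _ => ∀ z, ip x z p = 0) ?_ ?_ ?_ ?_ hp
      · rintro _ ⟨f, q, hf, rfl⟩ z
        rw [ip_msmul_right, hf, mul_zero]
      · exact fun z => ip_zero_right x z
      · intro a b _ _ ha hb z
        rw [ip_add_right, ha, hb, add_zero]
      · intro c a _ ha z
        rw [ip_smul_right, ha, mul_zero]
    have h := norm_ip_self x p
    rw [this, norm_zero] at h
    exact pow_eq_zero_iff (two_ne_zero) |>.1 h.symm
  · intro hp
    -- `b z = z^{1/4}`, and `g ε = b / (b² + ε)` approximates `1 / b`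
    set b : ℂ → ℝ := fun z => Real.sqrt (Real.sqrt z.re) with hb
    have hbc : Continuous b := by fun_prop
    have hb0 : b 0 = 0 := by simp [hb]
    have hbn : ∀ z, 0 ≤ b z := fun z => Real.sqrt_nonneg _
    have hbx : ∀ z : X, b (ip z p p) ^ 2 = nr z p := fun z => Real.sq_sqrt (Real.sqrt_nonneg _)
    let f : C₀(X, ℂ) := compC0 (fun z => (b z : ℂ)) (by fun_prop) (by simp [hb0]) (modIP X p p)
    have hden : ∀ (ε : ℝ), 0 < ε → ∀ z, b z ^ 2 + ε ≠ 0 := fun ε hε z => by positivity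
    have hgex : ∀ ε : ℝ, ∃ g : C₀(X, ℂ), 0 < ε →
        ∀ z, g z = ((b (ip z p p) / (b (ip z p p) ^ 2 + ε) : ℝ) : ℂ) := by
      intro ε
      by_cases hε : 0 < ε
      · refine ⟨compC0 (fun z => ((b z / (b z ^ 2 + ε) : ℝ) : ℂ)) ?_ ?_ (modIP X p p),
          fun _ z => rfl⟩
        · exact Complex.continuous_ofReal.comp
            (hbc.div ((hbc.pow 2).add continuous_const) (hden ε hε))
        · simp [hb0]
      · exact ⟨0, fun h => absurd h hε⟩
    choose g hg using hgex
    have hest : ∀ t ε : ℝ, 0 ≤ t → 0 < ε → |t - t ^ 2 * (t / (t ^ 2 + ε ^ 2))| ≤ ε := by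
      intro t ε ht hε
      have h1 : t - t ^ 2 * (t / (t ^ 2 + ε ^ 2)) = t * ε ^ 2 / (t ^ 2 + ε ^ 2) := by
        field_simp; ring
      rw [h1, abs_of_nonneg (by positivity), div_le_iff₀ (by positivity)]
      nlinarith [sq_nonneg (t - ε), mul_nonneg hε.le (sq_nonneg (t - ε))]
    obtain ⟨q, hq⟩ := exists_represent (X := X) (E := E) (fun q : E => q)
      (fun q ε hε => ⟨q, by simpa using hε⟩)
      (fun z x => if b (ip x p p) = 0 then 0 else ip x z p / b (ip x p p)) (by
        intro ε hε
        refine ⟨modSMul X p (g (ε ^ 2)), fun z y => ?_⟩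
        have hz := norm_ip_le y z p
        rw [ip_msmul_right, hg _ (by positivity)]
        split_ifs with h0
        · rw [h0]; simpa using mul_nonneg hε.le (nr_nonneg y z)
        · have hbp : 0 < b (ip y p p) := lt_of_le_of_ne (hbn _) (Ne.symm h0)
          set t := b (ip y p p) with ht
          have h1 : ip y z p * ((t / (t ^ 2 + ε ^ 2) : ℝ) : ℂ) - ip y z p / t =
              ip y z p * ((t / (t ^ 2 + ε ^ 2) - 1 / t : ℝ) : ℂ) := by
            push_cast; ring
          rw [h1, norm_mul, Complex.norm_real, Real.norm_eq_abs]
          have h2 : nr y p * |t / (t ^ 2 + ε ^ 2) - 1 / t| ≤ ε := by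
            rw [← hbx, ← ht]
            have h3 : t ^ 2 * (t / (t ^ 2 + ε ^ 2) - 1 / t) =
              -(t - t ^ 2 * (t / (t ^ 2 + ε ^ 2))) := by field_simp; ring
            have h4 := hest t ε hbp.le hε
            rwa [← abs_neg, ← h3, abs_mul, abs_of_nonneg (sq_nonneg t)] at h4
          calc ‖ip y z p‖ * |t / (t ^ 2 + ε ^ 2) - 1 / t|
              ≤ (nr y z * nr y p) * |t / (t ^ 2 + ε ^ 2) - 1 / t| := by gcongr
            _ = nr y z * (nr y p * |t / (t ^ 2 + ε ^ 2) - 1 / t|) := by ring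
            _ ≤ nr y z * ε := mul_le_mul_of_nonneg_left h2 (nr_nonneg _ _)
            _ = ε * nr y z := mul_comm _ _)
    have hfac : p = modSMul X q f := by
      refine eq_of_nr_sub X fun y => ?_
      have hz : ∀ z, ip y z (p - modSMul X q f) = 0 := by
        intro z
        rw [ip_sub_right, ip_msmul_right, hq]
        change ip y z p - _ * ((b (ip y p p) : ℝ) : ℂ) = 0
        split_ifs with h0
        · have h1 := norm_ip_le y z p
          rw [← hbx y, h0] at h1
          have : ip y z p = 0 := by simpa using h1
          rw [this]; simp
        · have : ((b (ip y p p) : ℝ) : ℂ) ≠ 0 := by exact_mod_cast h0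
          field_simp
          ring
      have h := norm_ip_self y (p - modSMul X q f)
      rw [hz, norm_zero] at h
      exact pow_eq_zero_iff (two_ne_zero) |>.1 h.symm
    refine Submodule.subset_span ⟨f, q, ?_, hfac⟩
    have h1 : b (ip x p p) = 0 := by
      have := hbx x
      rw [hp] at this
      exact pow_eq_zero_iff (two_ne_zero) |>.1 this
    change ((b (ip x p p) : ℝ) : ℂ) = 0
    rw [h1]; rfl

lemma fibMk_eq_iff [CompleteSpace E] {x : X} {p q : E} :
    fibMk X E x p = fibMk X E x q ↔ nr x (p - q) = 0 := by
  rw [← mem_fiberIdeal_iff]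
  exact Submodule.Quotient.eq _

lemma fibNormQ_fibMk [CompleteSpace E] (x : X) (p : E) :
    fibNormQ X E x (fibMk X E x p) = nr x p := by
  have : {r | ∃ q : E, fibMk X E x p = fibMk X E x q ∧ r = fibNormRep X E x q} = {nr x p} := by
    ext r
    constructor
    · rintro ⟨q, hq, rfl⟩
      exact (nr_eq_of_nr_sub (fibMk_eq_iff.1 hq)).symm
    · rintro rfl
      exact ⟨p, rfl, rfl⟩
  rw [fibNormQ, this, csInf_singleton]

end Pointwise

/-! ### The square root of `1 - B` for a contraction `B` -/

section SquareRoot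

/-- The coefficients of `1 - √(1 - t) = ∑ sqrtCoeff n * t ^ (n + 1)`. -/
def sqrtCoeff (n : ℕ) : ℝ := (catalan n : ℝ) / (2 * 4 ^ n)

lemma sqrtCoeff_nonneg (n : ℕ) : 0 ≤ sqrtCoeff n := by unfold sqrtCoeff; positivity

/-- The series telescopes: `sqrtCoeff n = d n - d (n + 1)` with `d n = centralBinom n / 4 ^ n`. -/
lemma summable_sqrtCoeff : Summable sqrtCoeff := by
  refine summable_of_sum_range_le (c := 1) sqrtCoeff_nonneg fun N => ?_
  have hstep : ∀ n, sqrtCoeff n =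
      (Nat.centralBinom n : ℝ) / 4 ^ n - (Nat.centralBinom (n + 1) : ℝ) / 4 ^ (n + 1) := by
    intro n
    have h1 : ((n : ℝ) + 1) * catalan n = Nat.centralBinom n := by
      exact_mod_cast succ_mul_catalan_eq_centralBinom n
    have h2 : ((n : ℝ) + 1) * Nat.centralBinom (n + 1) = 2 * (2 * n + 1) * Nat.centralBinom n := by
      exact_mod_cast Nat.succ_mul_centralBinom_succ n
    have h3 : (Nat.centralBinom (n + 1) : ℝ) = 2 * (2 * n + 1) * catalan n := by
      have h0 : ((n : ℝ) + 1) ≠ 0 := by positivity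
      apply mul_left_cancel₀ h0
      rw [h2, ← h1]; ring
    rw [sqrtCoeff, h3, ← h1, pow_succ]
    field_simp
    ring
  rw [Finset.sum_congr rfl fun n _ => hstep n, Finset.sum_range_sub']
  have : 0 ≤ (Nat.centralBinom N : ℝ) / 4 ^ N := by positivity
  simp only [Nat.centralBinom_zero, Nat.cast_one, pow_zero, div_one]
  linarith

/-- The recursion satisfied by the Catalan numbers. -/
lemma sqrtCoeff_succ (n : ℕ) :
    ∑ kl ∈ Finset.HasAntidiagonal.antidiagonal n, sqrtCoeff kl.1 * sqrtCoeff kl.2 = 2 * sqrtCoeff (n + 1) := by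
  have h : ∀ kl ∈ Finset.HasAntidiagonal.antidiagonal n, sqrtCoeff kl.1 * sqrtCoeff kl.2 =
      ((catalan kl.1 * catalan kl.2 : ℕ) : ℝ) / (4 * 4 ^ n) := by
    intro kl hkl
    rw [← Finset.HasAntidiagonal.mem_antidiagonal.1 hkl, sqrtCoeff, sqrtCoeff, pow_add]
    push_cast
    field_simp
    norm_num
    ring
  rw [Finset.sum_congr rfl h, ← Finset.sum_div, ← Nat.cast_sum, ← catalan_succ', sqrtCoeff,
    pow_succ]
  field_simp

/-- The element `1 - B` with `‖B‖ ≤ 1` has a square root given by the power series of `√(1 - t)`,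
which converges absolutely for `|t| ≤ 1`. -/
lemma exists_sqrt_one_sub {A : Type*} [NormedRing A] [NormedAlgebra ℂ A] [CompleteSpace A] (B : A)
    (hB : ‖B‖ ≤ 1) : ∃ S : A, HasSum (fun n => (sqrtCoeff n : ℂ) • B ^ (n + 1)) S ∧
      (1 - S) * (1 - S) = 1 - B := by
  have hpow : ∀ n, ‖B ^ (n + 1)‖ ≤ 1 := fun n =>
    (norm_pow_le' B n.succ_pos).trans (pow_le_one₀ (norm_nonneg _) hB)
  set f : ℕ → A := fun n => (sqrtCoeff n : ℂ) • B ^ (n + 1) with hf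
  have hsn : Summable fun n => ‖f n‖ := by
    refine Summable.of_nonneg_of_le (fun n => norm_nonneg _) (fun n => ?_) summable_sqrtCoeff
    rw [hf, norm_smul, Complex.norm_real, Real.norm_of_nonneg (sqrtCoeff_nonneg n)]
    exact mul_le_of_le_one_right (sqrtCoeff_nonneg n) (hpow n)
  have hs : Summable f := hsn.of_norm
  refine ⟨∑' n, f n, hs.hasSum, ?_⟩
  have hsq : (∑' n, f n) * (∑' n, f n) = (2 : ℂ) • ∑' n, f (n + 1) := by
    rw [tsum_mul_tsum_eq_tsum_sum_antidiagonal_of_summable_norm hsn hsn, ← tsum_const_smul'']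
    congr 1
    funext n
    have h : ∀ kl ∈ Finset.HasAntidiagonal.antidiagonal n, f kl.1 * f kl.2 =
        ((sqrtCoeff kl.1 * sqrtCoeff kl.2 : ℝ) : ℂ) • B ^ (n + 2) := by
      intro kl hkl
      rw [← Finset.HasAntidiagonal.mem_antidiagonal.1 hkl, hf]
      simp only [smul_mul_smul_comm, ← pow_add]
      push_cast
      congr 2
      ring
    rw [Finset.sum_congr rfl h, ← Finset.sum_smul, ← Complex.ofReal_sum, sqrtCoeff_succ, hf,
      smul_smul]
    push_cast
    rfl
  have hsplit : ∑' n, f n = f 0 + ∑' n, f (n + 1) := hs.tsum_eq_zero_add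
  have hf0 : (2 : ℂ) • f 0 = B := by
    simp only [hf, sqrtCoeff, smul_smul]
    norm_num
  have h2 : (2 : ℂ) • (∑' n, f n) = B + (2 : ℂ) • ∑' n, f (n + 1) := by
    rw [hsplit, smul_add, hf0]
  have h3 : (2 : ℂ) • (∑' n, f n) = (∑' n, f n) + ∑' n, f n := two_smul _ _
  calc (1 - ∑' n, f n) * (1 - ∑' n, f n)
      = 1 - ((∑' n, f n) + ∑' n, f n) + (∑' n, f n) * (∑' n, f n) := by noncomm_ring
    _ = 1 - B := by rw [hsq, ← h3, h2]; abel

end SquareRoot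

/-! ### Adjointable operators -/

section Adjoints

variable {X : Type} [TopologicalSpace X]
variable {E F K : Type} [NormedAddCommGroup E] [NormedSpace ℂ E] [HilbertCzeroModule X E]
  [NormedAddCommGroup F] [NormedSpace ℂ F] [HilbertCzeroModule X F]
  [NormedAddCommGroup K] [NormedSpace ℂ K] [HilbertCzeroModule X K]

variable (X) in
/-- The maps `T` and `T'` are adjoint to each other for the `C₀(X)`-valued inner products. -/
def IsAdj (T : E → F) (T' : F → E) : Prop := ∀ (x : X) (p : E) (q : F), ip x (T p) q = ip x p (T' q)

lemma IsAdj.symm {T : E → F} {T' : F → E} (h : IsAdj X T T') : IsAdj X T' T := fun x q p => by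
  rw [← ip_conj, ← h, ip_conj]

lemma IsAdj.comp {T : E → F} {T' : F → E} {U : F → K} {U' : K → F} (hU : IsAdj X U U')
    (hT : IsAdj X T T') : IsAdj X (fun p => U (T p)) (fun q => T' (U' q)) := fun x p q => by
  rw [hU, hT]

variable (X) in
lemma eq_of_ip {p q : E} (h : ∀ (x : X) (z : E), ip x z p = ip x z q) : p = q := by
  refine eq_of_nr_sub X fun x => ?_
  have h1 := norm_ip_self x (p - q)
  rw [ip_sub_right, h, sub_self, norm_zero] at h1
  exact pow_eq_zero_iff (two_ne_zero) |>.1 h1.symm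

lemma IsAdj.map_add {T : E → F} {T' : F → E} (h : IsAdj X T T') (p q : E) :
    T (p + q) = T p + T q :=
  eq_of_ip X fun x z => by rw [← h.symm, ip_add_right, h.symm, h.symm, ip_add_right]

lemma IsAdj.map_smul {T : E → F} {T' : F → E} (h : IsAdj X T T') (c : ℂ) (p : E) :
    T (c • p) = c • T p :=
  eq_of_ip X fun x z => by rw [← h.symm, ip_smul_right, h.symm, ip_smul_right]

lemma IsAdj.map_msmul {T : E → F} {T' : F → E} (h : IsAdj X T T') (p : E) (f : C₀(X, ℂ)) :
    T (modSMul X p f) = modSMul X (T p) f :=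
  eq_of_ip X fun x z => by rw [← h.symm, ip_msmul_right, h.symm, ip_msmul_right]

/-- Adjoint maps, one of which is fibrewise bounded, are bounded linear operators. -/
lemma IsAdj.exists_clm {T : E → F} {T' : F → E} (h : IsAdj X T T') {C : ℝ} (hC : 0 ≤ C)
    (hb : ∀ (x : X) p, nr x (T p) ≤ C * nr x p) :
    ∃ (A : E →L[ℂ] F) (A' : F →L[ℂ] E), (∀ p, A p = T p) ∧ (∀ q, A' q = T' q) := by
  have hb' : ∀ (x : X) q, nr x (T' q) ≤ C * nr x q := by
    intro x q
    refine nr_le_of_dual (fun p : E => p) (fun p ε hε => ⟨p, by simpa using hε⟩)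
      (mul_nonneg hC (nr_nonneg _ _)) fun p => ?_
    rw [← h]
    refine (norm_ip_le _ _ _).trans ((mul_le_mul_of_nonneg_right (hb x p) (nr_nonneg _ _)).trans
      (le_of_eq (by ring)))
  refine ⟨LinearMap.mkContinuous ⟨⟨T, h.map_add⟩, h.map_smul⟩ C fun p => ?_,
    LinearMap.mkContinuous ⟨⟨T', h.symm.map_add⟩, h.symm.map_smul⟩ C fun q => ?_,
    fun p => rfl, fun q => rfl⟩
  · refine norm_le_of_nr_le X (mul_nonneg hC (norm_nonneg _)) fun x => (hb x p).trans ?_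
    exact mul_le_mul_of_nonneg_left (nr_le_norm _ _) hC
  · refine norm_le_of_nr_le X (mul_nonneg hC (norm_nonneg _)) fun x => (hb' x q).trans ?_
    exact mul_le_mul_of_nonneg_left (nr_le_norm _ _) hC

lemma tendsto_ip_right {ι : Type*} {l : Filter ι} {u : ι → E} {q : E} (h : Tendsto u l (nhds q))
    (x : X) (p : E) : Tendsto (fun i => ip x p (u i)) l (nhds (ip x p q)) := by
  rw [tendsto_iff_norm_sub_tendsto_zero] at h ⊢
  refine squeeze_zero (fun _ => norm_nonneg _) (fun i => ?_) (by simpa using h.const_mul (nr x p))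
  rw [← ip_sub_right]
  exact (norm_ip_le _ _ _).trans (mul_le_mul_of_nonneg_left (nr_le_norm _ _) (nr_nonneg _ _))

lemma tendsto_nr {ι : Type*} {l : Filter ι} {u : ι → E} {q : E} (h : Tendsto u l (nhds q))
    (x : X) : Tendsto (fun i => nr x (u i)) l (nhds (nr x q)) := by
  rw [tendsto_iff_norm_sub_tendsto_zero] at h ⊢
  refine squeeze_zero (fun _ => norm_nonneg _) (fun i => ?_) h
  refine le_trans ?_ (nr_le_norm x _)
  rw [Real.norm_eq_abs, abs_le]
  have h1 := nr_le_add_sub x q (u i)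
  rw [nr_sub_comm] at h1
  have h2 := nr_le_add_sub x (u i) q
  constructor <;> linarith

lemma IsAdj.of_tendsto {ι : Type*} {l : Filter ι} [l.NeBot] {u : ι → E → F} {u' : ι → F → E}
    {T : E → F} {T' : F → E} (h : ∀ i, IsAdj X (u i) (u' i))
    (hT : ∀ p, Tendsto (fun i => u i p) l (nhds (T p)))
    (hT' : ∀ q, Tendsto (fun i => u' i q) l (nhds (T' q))) : IsAdj X T T' := by
  intro x p q
  have h1 := tendsto_ip_right (hT' q) x p
  have h2 := tendsto_ip_right (hT p) x q
  have h3 : Tendsto (fun i => ip x p (u' i q)) l (nhds (ip x (T p) q)) := by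
    rw [← ip_conj]
    refine ((Complex.continuous_conj.tendsto _).comp h2).congr fun i => ?_
    simp only [Function.comp, ip_conj]
    rw [h]
  exact tendsto_nhds_unique h3 h1

lemma IsAdj.sum {ι : Type*} (s : Finset ι) {u : ι → E →L[ℂ] F} {u' : ι → F →L[ℂ] E}
    (h : ∀ i, IsAdj X (u i) (u' i)) :
    IsAdj X (∑ i ∈ s, u i : E →L[ℂ] F) (∑ i ∈ s, u' i : F →L[ℂ] E) := by
  intro x p q
  rw [sum_apply, sum_apply, ip_sum_right, ← ip_conj,
    ip_sum_right, map_sum]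
  refine Finset.sum_congr rfl fun i _ => ?_
  rw [ip_conj, h]

lemma IsAdj.real_smul {u : E →L[ℂ] F} {u' : F →L[ℂ] E} (h : IsAdj X u u') (c : ℝ) :
    IsAdj X ((c : ℂ) • u : E →L[ℂ] F) ((c : ℂ) • u' : F →L[ℂ] E) := by
  intro x p q
  rw [smul_apply, smul_apply, ip_smul_left, ip_smul_right,
    h, Complex.conj_ofReal]

lemma IsAdj.hasSum {u : ℕ → E →L[ℂ] F} {u' : ℕ → F →L[ℂ] E} {T : E →L[ℂ] F} {T' : F →L[ℂ] E}
    (h : ∀ i, IsAdj X (u i) (u' i)) (hT : HasSum u T) (hT' : HasSum u' T') : IsAdj X T T' := by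
  refine IsAdj.of_tendsto (l := atTop) (u := fun s : Finset ℕ => (∑ i ∈ s, u i : E →L[ℂ] F))
    (u' := fun s : Finset ℕ => (∑ i ∈ s, u' i : F →L[ℂ] E)) (fun s => IsAdj.sum s h) ?_ ?_
  · exact fun p => ((ContinuousLinearMap.apply ℂ F p).continuous.tendsto _).comp hT
  · exact fun p => ((ContinuousLinearMap.apply ℂ E p).continuous.tendsto _).comp hT'

/-- Pointwise Urysohn functions with compact support. -/
lemma exists_cutoff [T2Space X] [LocallyCompactSpace X] {L V : Set X} (hL : IsCompact L)
    (hV : IsOpen V) (hLV : L ⊆ V) : ∃ k : C₀(X, ℂ), HasCompactSupport k ∧ (∀ x ∈ L, k x = 1) ∧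
      (∀ x, ∃ t : ℝ, k x = t ∧ 0 ≤ t ∧ t ≤ 1) ∧ (∀ x ∉ V, k x = 0) := by
  obtain ⟨f, h1, h2, h3, h4⟩ := exists_continuousMap_one_of_isCompact_subset_isOpen hL hV hLV
  have hc : HasCompactSupport fun x => (f x : ℂ) :=
    HasCompactSupport.comp_left (g := fun t : ℝ => (t : ℂ)) h2 rfl
  refine ⟨ofCc (fun x => (f x : ℂ)) (by fun_prop) hc, hc, fun x hx => ?_,
    fun x => ⟨f x, rfl, h4 x⟩, fun x hx => ?_⟩
  · simp [h1 hx]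
  · have : f x = 0 := by
      by_contra h
      exact hx (h3 (subset_tsupport _ h))
    simp [this]

/-- An adjointable operator is fibrewise bounded by its norm: localise near `x`. -/
lemma IsAdj.nr_le [T2Space X] [LocallyCompactSpace X] {T : E →L[ℂ] F} {T' : F → E}
    (h : IsAdj X T T') (x : X) (p : E) : nr x (T p) ≤ ‖T‖ * nr x p := by
  have key : ∀ δ : ℝ, 0 < δ → nr x (T p) ≤ ‖T‖ * (nr x p + δ) := by
    intro δ hδ
    obtain ⟨k, -, hk1, hk2, hk3⟩ := exists_cutoff (isCompact_singleton (x := x))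
      (V := {y | nr y p < nr x p + δ}) (isOpen_lt (continuous_nr p) continuous_const)
      (by rintro y rfl; simpa using hδ)
    have hn : ‖modSMul X p k‖ ≤ nr x p + δ := by
      refine norm_le_of_nr_le X (add_nonneg (nr_nonneg _ _) hδ.le) fun y => ?_
      rw [nr_msmul]
      by_cases hy : nr y p < nr x p + δ
      · obtain ⟨t, ht, ht0, ht1⟩ := hk2 y
        rw [ht, Complex.norm_real, Real.norm_of_nonneg ht0]
        exact (mul_le_of_le_one_left (nr_nonneg _ _) ht1).trans hy.le
      · rw [hk3 y hy]
        simpa using add_nonneg (nr_nonneg x p) hδ.le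
    calc nr x (T p) = nr x (T (modSMul X p k)) := by
          rw [h.map_msmul, nr_msmul, hk1 x rfl]; simp
      _ ≤ ‖T (modSMul X p k)‖ := nr_le_norm _ _
      _ ≤ ‖T‖ * ‖modSMul X p k‖ := T.le_opNorm _
      _ ≤ ‖T‖ * (nr x p + δ) := mul_le_mul_of_nonneg_left hn (norm_nonneg _)
  have h1 : Tendsto (fun δ : ℝ => ‖T‖ * (nr x p + δ)) (nhdsWithin 0 (Set.Ioi 0))
      (nhds (‖T‖ * (nr x p + 0))) :=
    (Continuous.tendsto (by fun_prop) 0).mono_left nhdsWithin_le_nhds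
  rw [add_zero] at h1
  exact ge_of_tendsto h1 (by filter_upwards [self_mem_nhdsWithin] with δ hδ using key δ hδ)

/-- Polarization, for points and vectors in possibly different fibres. -/
lemma ip_eq_of_nr_eq {x y : X} {p q : E} {p' q' : F}
    (h : ∀ c : ℂ, nr y (p' + c • q') = nr x (p + c • q)) : ip y p' q' = ip x p q := by
  have ex : ∀ c : ℂ, nr x (p + c • q) ^ 2 =
      nr x p ^ 2 + 2 * (c * ip x p q).re + ‖c‖ ^ 2 * nr x q ^ 2 := by
    intro c
    have h0 : ip x q p = conj (ip x p q) := (ip_conj x q p).symm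
    rw [nr_sq, ip_add_left, ip_add_right, ip_add_right, ip_smul_left, ip_smul_left, ip_smul_right,
      ip_smul_right, h0, ip_self, ip_self, ← Complex.normSq_eq_norm_sq, Complex.normSq_apply]
    simp only [Complex.add_re, Complex.mul_re, Complex.conj_re, Complex.conj_im, Complex.mul_im,
      Complex.ofReal_re, Complex.ofReal_im]
    ring
  have ey : ∀ c : ℂ, nr y (p' + c • q') ^ 2 =
      nr y p' ^ 2 + 2 * (c * ip y p' q').re + ‖c‖ ^ 2 * nr y q' ^ 2 := by
    intro c
    have h0 : ip y q' p' = conj (ip y p' q') := (ip_conj y q' p').symm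
    rw [nr_sq, ip_add_left, ip_add_right, ip_add_right, ip_smul_left, ip_smul_left, ip_smul_right,
      ip_smul_right, h0, ip_self, ip_self, ← Complex.normSq_eq_norm_sq, Complex.normSq_apply]
    simp only [Complex.add_re, Complex.mul_re, Complex.conj_re, Complex.conj_im, Complex.mul_im,
      Complex.ofReal_re, Complex.ofReal_im]
    ring
  have e : ∀ c : ℂ, nr y p' ^ 2 + 2 * (c * ip y p' q').re + ‖c‖ ^ 2 * nr y q' ^ 2 =
      nr x p ^ 2 + 2 * (c * ip x p q).re + ‖c‖ ^ 2 * nr x q ^ 2 := fun c => by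
    rw [← ey, ← ex, h]
  have e1 := e 1
  have e2 := e (-1)
  have e3 := e Complex.I
  have e4 := e (-Complex.I)
  simp only [one_mul, norm_neg, norm_one, Complex.norm_I, neg_mul, Complex.neg_re, Complex.I_mul_re]
    at e1 e2 e3 e4
  refine Complex.ext ?_ ?_ <;> linarith

end Adjoints

/-! ### Equivariance -/

section Equivariance

variable {X : Type} [TopologicalSpace X] {𝒢 : LCGroupoid X}
variable {E F K : Type} [NormedAddCommGroup E] [NormedSpace ℂ E] [HilbertCzeroModule X E]
  [CompleteSpace E] [NormedAddCommGroup F] [NormedSpace ℂ F] [HilbertCzeroModule X F]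
  [CompleteSpace F] [NormedAddCommGroup K] [NormedSpace ℂ K] [HilbertCzeroModule X K]
  [CompleteSpace K]

/-- The arrow `g` carries the class of `p` in the fibre over `s g` to the class of `p'` in the
fibre over `r g`. -/
def Rel (A : GAction 𝒢 E) (g : 𝒢.G) (p p' : E) : Prop :=
  A.act g (fibMk X E (𝒢.s g) p) = fibMk X E (𝒢.r g) p'

variable {A : GAction 𝒢 E} {g : 𝒢.G}

lemma Rel.exists_right (A : GAction 𝒢 E) (g : 𝒢.G) (p : E) : ∃ p', Rel A g p p' := by
  obtain ⟨p', hp'⟩ := Submodule.Quotient.mk_surjective _ (A.act g (fibMk X E (𝒢.s g) p))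
  exact ⟨p', hp'.symm⟩

lemma Rel.exists_left (A : GAction 𝒢 E) (g : 𝒢.G) (p' : E) : ∃ p, Rel A g p p' := by
  obtain ⟨v, hv⟩ := A.act_surjective g (fibMk X E (𝒢.r g) p')
  obtain ⟨p, rfl⟩ := Submodule.Quotient.mk_surjective _ v
  exact ⟨p, hv⟩

lemma Rel.nr {p p' : E} (h : Rel A g p p') : nr (𝒢.r g) p' = nr (𝒢.s g) p := by
  rw [← fibNormQ_fibMk, ← fibNormQ_fibMk, ← h, A.act_norm]

lemma fibMk_add (x : X) (p q : E) : fibMk X E x (p + q) = fibMk X E x p + fibMk X E x q := rfl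

lemma fibMk_smul (x : X) (c : ℂ) (p : E) : fibMk X E x (c • p) = c • fibMk X E x p := rfl

lemma fibMk_sub (x : X) (p q : E) : fibMk X E x (p - q) = fibMk X E x p - fibMk X E x q := rfl

lemma Rel.add {p p' q q' : E} (h : Rel A g p p') (h' : Rel A g q q') :
    Rel A g (p + q) (p' + q') := by
  unfold Rel at *
  rw [fibMk_add, fibMk_add, A.act_add, h, h']

lemma Rel.smul {p p' : E} (h : Rel A g p p') (c : ℂ) : Rel A g (c • p) (c • p') := by
  unfold Rel at *
  rw [fibMk_smul, fibMk_smul, A.act_csmul, h]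

lemma Rel.sub {p p' q q' : E} (h : Rel A g p p') (h' : Rel A g q q') :
    Rel A g (p - q) (p' - q') := by
  have := h.add (h'.smul (-1))
  simpa [sub_eq_add_neg] using this

lemma Rel.ip {p p' q q' : E} (h : Rel A g p p') (h' : Rel A g q q') :
    ip (𝒢.r g) p' q' = ip (𝒢.s g) p q :=
  ip_eq_of_nr_eq fun c => (h.add (h'.smul c)).nr

lemma Rel.congr {p p' q q' : E} (h : Rel A g p p') (h1 : Stabilization.nr (𝒢.s g) (p - q) = 0)
    (h2 : Stabilization.nr (𝒢.r g) (p' - q') = 0) : Rel A g q q' := by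
  unfold Rel at *
  rw [← fibMk_eq_iff.2 h1, ← fibMk_eq_iff.2 h2, h]

lemma Rel.unique {p p' q' : E} (h : Rel A g p p') (hq : Rel A g p q') :
    Stabilization.nr (𝒢.r g) (p' - q') = 0 :=
  fibMk_eq_iff.1 (h.symm.trans hq)

/-- The relation `Rel A g` is closed. -/
lemma Rel.of_close {q q' : E} (h : ∀ ε : ℝ, 0 < ε → ∃ p p', Rel A g p p' ∧
    Stabilization.nr (𝒢.s g) (q - p) ≤ ε ∧ Stabilization.nr (𝒢.r g) (q' - p') ≤ ε) :
    Rel A g q q' := by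
  obtain ⟨q₁, hq₁⟩ := Rel.exists_right A g q
  refine hq₁.congr (by rw [sub_self, nr_zero]) (le_antisymm ?_ (nr_nonneg _ _))
  refine le_of_forall_pos_le_add fun ε hε => ?_
  obtain ⟨p, p', hp, h1, h2⟩ := h (ε / 2) (half_pos hε)
  have h3 := (hq₁.sub hp).nr
  have h4 := nr_sub_le (𝒢.r g) q₁ p' q'
  rw [nr_sub_comm _ p' q'] at h4
  linarith

lemma Rel.of_tendsto {ι : Type*} {l : Filter ι} [l.NeBot] {u u' : ι → E} {q q' : E}
    (h : ∀ i, Rel A g (u i) (u' i)) (hu : Tendsto u l (nhds q)) (hu' : Tendsto u' l (nhds q')) :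
    Rel A g q q' := by
  refine Rel.of_close fun ε hε => ?_
  have h1 := tendsto_nr (tendsto_const_nhds.sub hu : Tendsto (fun i => q - u i) l _) (𝒢.s g)
  have h2 := tendsto_nr (tendsto_const_nhds.sub hu' : Tendsto (fun i => q' - u' i) l _) (𝒢.r g)
  rw [sub_self, nr_zero] at h1 h2
  obtain ⟨i, hi1, hi2⟩ := ((h1.eventually_le_const hε).and (h2.eventually_le_const hε)).exists
  exact ⟨u i, u' i, h i, hi1, hi2⟩

lemma fcast_fibMk {x y : X} (h : x = y) (p : E) : fcast X E h (fibMk X E x p) = fibMk X E y p := by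
  subst h; rfl

lemma Rel.mul {h : 𝒢.G} (hc : 𝒢.s g = 𝒢.r h) {p q t : E} (h1 : Rel A h p q) (h2 : Rel A g q t) :
    Rel A (𝒢.mul g h) p t := by
  have := A.act_mul g h hc (fibMk X E (𝒢.s h) p)
  unfold Rel at *
  rwa [fcast_fibMk, h1, fcast_fibMk, h2, fcast_fibMk] at this

lemma Rel.unit (A : GAction 𝒢 E) (x : X) (p : E) : Rel A (𝒢.unit x) p p := by
  have := A.act_unit x (fibMk X E x p)
  rwa [fcast_fibMk, fcast_fibMk] at this

/-- Equivariance of a map of modules. -/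
def Equi (AE : GAction 𝒢 E) (AF : GAction 𝒢 F) (T : E → F) : Prop :=
  ∀ g p p', Rel AE g p p' → Rel AF g (T p) (T p')

variable {AE : GAction 𝒢 E} {AF : GAction 𝒢 F} {AK : GAction 𝒢 K}

lemma Equi.comp {T : E → F} {U : F → K} (hU : Equi AF AK U) (hT : Equi AE AF T) :
    Equi AE AK (fun p => U (T p)) := fun g p p' h => hU g _ _ (hT g _ _ h)

lemma Equi.smul {T : E → F} (hT : Equi AE AF T) (c : ℂ) : Equi AE AF (fun p => c • T p) :=
  fun g p p' h => (hT g _ _ h).smul c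

lemma Equi.add {T U : E → F} (hT : Equi AE AF T) (hU : Equi AE AF U) :
    Equi AE AF (fun p => T p + U p) := fun g p p' h => (hT g _ _ h).add (hU g _ _ h)

lemma Equi.sub {T U : E → F} (hT : Equi AE AF T) (hU : Equi AE AF U) :
    Equi AE AF (fun p => T p - U p) := fun g p p' h => (hT g _ _ h).sub (hU g _ _ h)

lemma Rel.zero (A : GAction 𝒢 E) (g : 𝒢.G) : Rel A g 0 0 := by
  obtain ⟨p', h⟩ := Rel.exists_right A g 0
  simpa using h.smul 0

lemma Equi.sum {ι : Type*} (s : Finset ι) {T : ι → E → F} (hT : ∀ i, Equi AE AF (T i)) :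
    Equi AE AF (fun p => ∑ i ∈ s, T i p) := by
  classical
  intro g p p' h
  induction s using Finset.induction_on with
  | empty => simpa using Rel.zero AF g
  | insert a s ha ih =>
    simp only [Finset.sum_insert ha]
    exact (hT a g _ _ h).add ih

lemma Equi.of_tendsto {ι : Type*} {l : Filter ι} [l.NeBot] {u : ι → E → F} {T : E → F}
    (h : ∀ i, Equi AE AF (u i)) (hT : ∀ p, Tendsto (fun i => u i p) l (nhds (T p))) :
    Equi AE AF T := fun g p p' hp => Rel.of_tendsto (fun i => h i g p p' hp) (hT p) (hT p')

lemma Equi.hasSum {u : ℕ → E →L[ℂ] F} {T : E →L[ℂ] F} (h : ∀ i, Equi AE AF (u i))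
    (hT : HasSum u T) : Equi AE AF T := by
  refine Equi.of_tendsto (l := atTop) (u := fun s : Finset ℕ => (∑ i ∈ s, u i : E →L[ℂ] F))
    (fun s => ?_) fun p => ((ContinuousLinearMap.apply ℂ F p).continuous.tendsto _).comp hT
  have := Equi.sum s h
  intro g p p' hp
  rw [sum_apply, sum_apply]
  exact this g p p' hp

/-- The adjoint of an equivariant operator is equivariant, because the action is unitary. -/
lemma Equi.adjoint {T : E → F} {T' : F → E} (hT : Equi AE AF T) (h : IsAdj X T T') :
    Equi AF AE T' := by
  intro g q q' hq
  obtain ⟨w, hw⟩ := Rel.exists_right AE g (T' q)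
  refine hw.congr (by rw [sub_self, nr_zero]) ?_
  obtain ⟨v, hv⟩ := Rel.exists_left AE g (w - T' q')
  have h1 : ip (𝒢.r g) (w - T' q') (w - T' q') = 0 := by
    rw [ip_sub_right, ← h, hv.ip hw, (hT g _ _ hv).ip hq, h, sub_self]
  have h2 := norm_ip_self (𝒢.r g) (w - T' q')
  rw [h1, norm_zero] at h2
  exact pow_eq_zero_iff two_ne_zero |>.1 h2.symm

lemma exists_near {D : E → E} (hD : DenseRange D) (x y : X) (p : E) {ε : ℝ} (hε : 0 < ε) :
    ∃ t, nr x (p - D t) ≤ ε ∧ nr y (p - D t) ≤ ε := by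
  obtain ⟨t, ht⟩ := hD.exists_dist_lt p hε
  rw [dist_eq_norm] at ht
  exact ⟨t, (nr_le_norm _ _).trans ht.le, (nr_le_norm _ _).trans ht.le⟩

/-- **Polar decomposition.** An equivariant adjointable contraction `V` with dense range, whose
adjoint `W` has dense range as well, yields an equivariant unitary, namely the closure of
`|V| p ↦ V p`. -/
lemma exists_unitary [T2Space X] [LocallyCompactSpace X] (V : E →L[ℂ] F) (W : F →L[ℂ] E)
    (hVW : IsAdj X V W) (hV1 : ‖V‖ ≤ 1) (hW1 : ‖W‖ ≤ 1) (hVd : DenseRange V) (hWd : DenseRange W)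
    (hV : Equi AE AF V) : GEquiv AE AF := by
  set B : E →L[ℂ] E := 1 - W.comp V with hBdef
  have hWV : IsAdj X (fun p => W (V p)) (fun p => W (V p)) := hVW.symm.comp hVW
  have hVle : ∀ (x : X) p, nr x (V p) ≤ nr x p := fun x p =>
    (hVW.nr_le x p).trans (mul_le_of_le_one_left (nr_nonneg _ _) hV1)
  have hWle : ∀ (x : X) p, nr x (W p) ≤ nr x p := fun x p =>
    (hVW.symm.nr_le x p).trans (mul_le_of_le_one_left (nr_nonneg _ _) hW1)
  have hBp : ∀ p, B p = p - W (V p) := fun p => rfl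
  have hBle : ∀ (x : X) p, nr x (B p) ≤ nr x p := by
    intro x p
    refine (sq_le_sq₀ (nr_nonneg _ _) (nr_nonneg _ _)).1 ?_
    have h1 : ip x p (W (V p)) = ((nr x (V p) ^ 2 : ℝ) : ℂ) := by rw [← hVW, ip_self]
    have h2 : ip x (W (V p)) p = ((nr x (V p) ^ 2 : ℝ) : ℂ) := by rw [hVW.symm, ip_self]
    have h3 : nr x (B p) ^ 2 = nr x p ^ 2 - 2 * nr x (V p) ^ 2 + nr x (W (V p)) ^ 2 := by
      rw [nr_sq, hBp, ip_sub_left, ip_sub_right, ip_sub_right, h1, h2, ip_self, ip_self]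
      simp only [Complex.sub_re, Complex.ofReal_re]
      ring
    have h4 : nr x (W (V p)) ^ 2 ≤ nr x (V p) ^ 2 :=
      pow_le_pow_left₀ (nr_nonneg _ _) (hWle x _) 2
    nlinarith [sq_nonneg (nr x (V p))]
  have hB1 : ‖B‖ ≤ 1 := by
    refine B.opNorm_le_bound zero_le_one fun p => ?_
    rw [one_mul]
    exact norm_le_of_nr_le X (norm_nonneg _) fun x => (hBle x p).trans (nr_le_norm _ _)
  have hBadj : IsAdj X B B := fun x p q => by
    rw [hBp, hBp, ip_sub_left, ip_sub_right, hWV x p q]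
  have hBpow : ∀ n, IsAdj X (B ^ (n + 1) : E →L[ℂ] E) (B ^ (n + 1) : E →L[ℂ] E) := by
    intro n
    induction n with
    | zero => simpa using hBadj
    | succ n ih =>
      intro x p q
      have e1 : (B ^ (n + 1 + 1) : E →L[ℂ] E) p = B ((B ^ (n + 1) : E →L[ℂ] E) p) := by
        rw [pow_succ']; rfl
      have e2 : (B ^ (n + 1 + 1) : E →L[ℂ] E) q = (B ^ (n + 1) : E →L[ℂ] E) (B q) := by
        rw [pow_succ]; rfl
      rw [e1, e2, hBadj, ih]
  have hW : Equi AF AE W := hV.adjoint hVW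
  have hBequi : Equi AE AE B := fun g p p' h => by
    rw [hBp, hBp]
    exact h.sub (hW g _ _ (hV g _ _ h))
  have hBpowequi : ∀ n, Equi AE AE (B ^ (n + 1) : E →L[ℂ] E) := by
    intro n
    induction n with
    | zero => simpa using hBequi
    | succ n ih =>
      intro g p p' h
      have e1 : ∀ p, (B ^ (n + 1 + 1) : E →L[ℂ] E) p = B ((B ^ (n + 1) : E →L[ℂ] E) p) := by
        intro p; rw [pow_succ']; rfl
      rw [e1, e1]
      exact hBequi g _ _ (ih g _ _ h)
  obtain ⟨S, hS, hSS⟩ := exists_sqrt_one_sub B hB1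
  have hSadj : IsAdj X S S := IsAdj.hasSum (fun n => (hBpow n).real_smul _) hS hS
  have hSequi : Equi AE AE S := Equi.hasSum (fun n => (hBpowequi n).smul _) hS
  set R : E →L[ℂ] E := 1 - S with hRdef
  have hRp : ∀ p, R p = p - S p := fun p => rfl
  have hRR : ∀ p, R (R p) = W (V p) := by
    intro p
    have : (R * R) p = (1 - B) p := by rw [hSS]
    rw [hBdef, sub_sub_cancel] at this
    exact this
  have hRadj : IsAdj X R R := fun x p q => by rw [hRp, hRp, ip_sub_left, ip_sub_right, hSadj]
  have hRequi : Equi AE AE R := fun g p p' h => by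
    rw [hRp, hRp]; exact h.sub (hSequi g _ _ h)
  have hRd : DenseRange R := by
    have h1 : DenseRange (fun p => W (V p)) := hWd.comp hVd W.continuous
    refine h1.mono ?_
    rintro _ ⟨p, rfl⟩
    exact ⟨R p, hRR p⟩
  have hnr : ∀ (x : X) p, nr x (V p) = nr x (R p) := by
    intro x p
    rw [← sq_eq_sq₀ (nr_nonneg _ _) (nr_nonneg _ _), ← norm_ip_self, ← norm_ip_self, hVW, hRadj,
      hRR]
  have hnorm : ∃ C, ∀ p, ‖(V : E →ₗ[ℂ] F) p‖ ≤ C * ‖(R : E →ₗ[ℂ] E) p‖ :=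
    ⟨1, fun p => by
      rw [one_mul]
      refine norm_le_of_nr_le X (norm_nonneg _) fun x => ?_
      exact (hnr x p).le.trans (nr_le_norm _ _)⟩
  set U : E →L[ℂ] F := (V : E →ₗ[ℂ] F).extendOfNorm (R : E →ₗ[ℂ] E) with hUdef
  have hUR : ∀ p, U (R p) = V p := fun p => LinearMap.extendOfNorm_eq hRd hnorm p
  have hUnr : ∀ (x : X) q, nr x (U q) = nr x q := by
    intro x q
    have hcl : ∀ {K' : Type} [NormedAddCommGroup K'] [NormedSpace ℂ K'] [HilbertCzeroModule X K'],
        Continuous fun q : K' => nr x q := fun {K'} _ _ _ =>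
      continuous_iff_continuousAt.2 fun q => tendsto_nr tendsto_id x
    refine hRd.induction_on (p := fun q => nr x (U q) = nr x q) q ?_ fun p => ?_
    · exact isClosed_eq (hcl.comp U.continuous) hcl
    · rw [hUR, hnr]
  have hUip : ∀ (x : X) p q, ip x (U p) (U q) = ip x p q := fun x p q =>
    ip_eq_of_nr_eq fun c => by rw [← map_smul, ← map_add, hUnr]
  have hUnorm : ∀ q, ‖U q‖ = ‖q‖ := fun q => le_antisymm
    (norm_le_of_nr_le X (norm_nonneg _) fun x => (hUnr x q).le.trans (nr_le_norm _ _))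
    (norm_le_of_nr_le X (norm_nonneg _) fun x => (hUnr x q).symm.le.trans (nr_le_norm _ _))
  have hUiso : Isometry U := AddMonoidHomClass.isometry_of_norm U hUnorm
  have hUsurj : Function.Surjective U := by
    have h1 : IsClosed (Set.range U) := hUiso.isClosedEmbedding.isClosed_range
    have h2 : Set.range V ⊆ Set.range U := by
      rintro _ ⟨p, rfl⟩
      exact ⟨R p, hUR p⟩
    intro q
    exact closure_minimal h2 h1 (hVd q)
  refine ⟨U, ⟨hUiso.injective, hUsurj⟩, map_add U, map_smul U, fun p f => ?_, fun p q => ?_,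
    fun g p p' h => ?_⟩
  · refine eq_of_ip X fun x z => ?_
    obtain ⟨z, rfl⟩ := hUsurj z
    rw [hUip, ip_msmul_right, ip_msmul_right, hUip]
  · ext x
    exact hUip x p q
  · change Rel AF g (U p) (U p')
    refine Rel.of_close fun ε hε => ?_
    obtain ⟨t, ht, -⟩ := exists_near hRd (𝒢.s g) (𝒢.s g) p hε
    obtain ⟨t', ht'⟩ := Rel.exists_right AE g t
    refine ⟨V t, V t', hV g _ _ ht', ?_, ?_⟩
    · rwa [← hUR, ← map_sub, hUnr]
    · have h1 := (Rel.sub h (hRequi g _ _ ht')).nr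
      rw [← hUR, ← map_sub, hUnr, h1]
      exact ht

end Equivariance

/-! ### Integration against the Haar system -/

section Haar

open MeasureTheory

variable {X : Type} [TopologicalSpace X] {𝒢 : LCGroupoid X} (hs : HaarSystem X 𝒢)

lemma haar_ae (y : X) : ∀ᵐ g ∂(hs.lam y), 𝒢.r g = y := by
  rw [ae_iff]
  exact hs.concentrated y

instance haar_finite (y : X) : IsFiniteMeasureOnCompacts (hs.lam y) :=
  ⟨fun K hK => lt_top_iff_ne_top.2 (hs.finiteOnCompacts y K hK)⟩

lemma haar_integral_eq_zero {f : 𝒢.G → ℂ} {y : X} (h : y ∉ 𝒢.r '' tsupport f) :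
    ∫ g, f g ∂(hs.lam y) = 0 := by
  refine integral_eq_zero_of_ae ?_
  filter_upwards [haar_ae hs y] with g hg
  by_contra hne
  exact h ⟨g, subset_tsupport _ hne, hg⟩

/-- The function `y ↦ ∫ f dλ^y`. -/
lemma exists_haar_C0 [T2Space X] {f : 𝒢.G → ℂ} (hf : Continuous f) (hc : HasCompactSupport f) :
    ∃ k : C₀(X, ℂ), ∀ y, k y = ∫ g, f g ∂(hs.lam y) :=
  ⟨ofCc (fun y => ∫ g, f g ∂(hs.lam y)) (hs.integral_continuous f hf hc)
    (HasCompactSupport.intro (hc.isCompact.image 𝒢.r_cont) fun _ hy =>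
      haar_integral_eq_zero hs hy), fun _ => rfl⟩

lemma haar_bdd [T2Space X] {f : 𝒢.G → ℝ} (hf : Continuous f) (hc : HasCompactSupport f) :
    ∃ C : ℝ, 0 ≤ C ∧ ∀ y, ∫ g, f g ∂(hs.lam y) ≤ C := by
  obtain ⟨k, hk⟩ := exists_haar_C0 hs (f := fun g => (f g : ℂ)) (by fun_prop)
    (HasCompactSupport.comp_left (g := fun t : ℝ => (t : ℂ)) hc rfl)
  refine ⟨‖k‖, norm_nonneg _, fun y => ?_⟩
  refine (le_abs_self _).trans ?_
  rw [← Real.norm_eq_abs, ← Complex.norm_real, ← integral_complex_ofReal, ← hk]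
  exact C0_apply_le k y

lemma haar_integrable {f : 𝒢.G → ℂ} (hf : Continuous f) (hc : HasCompactSupport f) (y : X) :
    Integrable f (hs.lam y) := hf.integrable_of_hasCompactSupport hc

lemma haar_integrable_real {f : 𝒢.G → ℝ} (hf : Continuous f) (hc : HasCompactSupport f) (y : X) :
    Integrable f (hs.lam y) := hf.integrable_of_hasCompactSupport hc

variable {E : Type} [NormedAddCommGroup E] [NormedSpace ℂ E] [HilbertCzeroModule X E]

/-- A function on `G` that vanishes off `{g | r g ∈ L', s g ∈ L}` for compact `L` and `L'` has
compact support, by properness of `G`. -/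
lemma hasCompactSupport_of_proper {R : Type*} [Zero R] {f : 𝒢.G → R} {L L' : Set X}
    (hL : IsCompact L) (hL' : IsCompact L') (h1 : ∀ g, 𝒢.r g ∉ L' → f g = 0)
    (h2 : ∀ g, 𝒢.s g ∉ L → f g = 0) : HasCompactSupport f := by
  refine HasCompactSupport.intro (𝒢.proper.isCompact_preimage (hL'.prod hL)) fun g hg => ?_
  by_cases hr : 𝒢.r g ∈ L'
  · exact h2 g fun hs => hg ⟨hr, hs⟩
  · exact h1 g hr

variable {η : E} {L : Set X}

lemma weight_cc (hL : IsCompact L) (hη : ∀ x ∉ L, nr x η = 0) (k : C₀(X, ℂ))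
    (hk : HasCompactSupport k) :
    Continuous (fun g => k (𝒢.r g) * ((nr (𝒢.s g) η ^ 2 : ℝ) : ℂ)) ∧
      HasCompactSupport (fun g => k (𝒢.r g) * ((nr (𝒢.s g) η ^ 2 : ℝ) : ℂ)) := by
  constructor
  · exact (k.continuous.comp 𝒢.r_cont).mul (Complex.continuous_ofReal.comp
      (((continuous_nr η).comp 𝒢.s_cont).pow 2))
  · refine hasCompactSupport_of_proper hL hk (fun g hg => ?_) fun g hg => ?_
    · rw [image_eq_zero_of_notMem_tsupport hg, zero_mul]
    · rw [hη _ hg]; simp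

variable [T2Space X] [LocallyCompactSpace X]

lemma exists_bump (y : X) : ∃ k : C₀(X, ℂ), HasCompactSupport k ∧ k y = 1 := by
  obtain ⟨k, h1, h2, -, -⟩ := exists_cutoff (isCompact_singleton (x := y)) isOpen_univ
    (Set.subset_univ _)
  exact ⟨k, h1, h2 y rfl⟩

lemma weight_integrable (hL : IsCompact L) (hη : ∀ x ∉ L, nr x η = 0) (y : X) :
    Integrable (fun g => nr (𝒢.s g) η ^ 2) (hs.lam y) := by
  obtain ⟨k, hk, hky⟩ := exists_bump y
  obtain ⟨h1, h2⟩ := weight_cc (𝒢 := 𝒢) hL hη k hk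
  refine (haar_integrable hs h1 h2 y).re.congr ?_
  filter_upwards [haar_ae hs y] with g hg
  rw [hg, hky, one_mul]
  rfl

lemma weight_integral (hL : IsCompact L) (hη : ∀ x ∉ L, nr x η = 0) {y : X} {k : C₀(X, ℂ)}
    (hky : k y = 1) : ∫ g, k (𝒢.r g) * ((nr (𝒢.s g) η ^ 2 : ℝ) : ℂ) ∂(hs.lam y) =
      ((∫ g, nr (𝒢.s g) η ^ 2 ∂(hs.lam y) : ℝ) : ℂ) := by
  rw [← integral_complex_ofReal]
  refine integral_congr_ae ?_
  filter_upwards [haar_ae hs y] with g hg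
  rw [hg, hky, one_mul]

/-- The function `y ↦ ∫ ‖η(s g)‖² dλ^y` is bounded: on the support of `η` by continuity, and
elsewhere by left invariance. -/
lemma weight_bdd (hL : IsCompact L) (hη : ∀ x ∉ L, nr x η = 0) :
    ∃ C : ℝ, 0 ≤ C ∧ ∀ y, ∫ g, nr (𝒢.s g) η ^ 2 ∂(hs.lam y) ≤ C := by
  obtain ⟨κ, hκ, hκL, -, -⟩ := exists_cutoff hL isOpen_univ (Set.subset_univ _)
  obtain ⟨h1, h2⟩ := weight_cc (𝒢 := 𝒢) hL hη κ hκ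
  obtain ⟨I, hI⟩ := exists_haar_C0 hs h1 h2
  have hL' : ∀ y ∈ L, ∫ g, nr (𝒢.s g) η ^ 2 ∂(hs.lam y) ≤ ‖I‖ := by
    intro y hy
    refine (le_abs_self _).trans ?_
    rw [← Real.norm_eq_abs, ← Complex.norm_real, ← weight_integral hs hL hη (hκL y hy), ← hI]
    exact C0_apply_le I y
  refine ⟨‖I‖, norm_nonneg _, fun y => ?_⟩
  by_cases hy : ∃ g, 𝒢.r g = y ∧ 𝒢.s g ∈ L
  · obtain ⟨g₀, rfl, hg₀⟩ := hy
    refine le_trans (le_of_eq ?_) (hL' _ hg₀)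
    obtain ⟨k, hk, hky⟩ := exists_bump (𝒢.r g₀)
    obtain ⟨k1, k2⟩ := weight_cc (𝒢 := 𝒢) hL hη k hk
    have e := hs.left_invariant g₀ _ k1 k2
    rw [weight_integral hs hL hη hky] at e
    have e2 : ∫ g, k (𝒢.r (𝒢.mul g₀ g)) * ((nr (𝒢.s (𝒢.mul g₀ g)) η ^ 2 : ℝ) : ℂ)
        ∂(hs.lam (𝒢.s g₀)) = ((∫ g, nr (𝒢.s g) η ^ 2 ∂(hs.lam (𝒢.s g₀)) : ℝ) : ℂ) := by
      rw [← integral_complex_ofReal]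
      refine integral_congr_ae ?_
      filter_upwards [haar_ae hs (𝒢.s g₀)] with g hg
      rw [𝒢.r_mul _ _ hg.symm, 𝒢.s_mul _ _ hg.symm, hky, one_mul]
    rw [e2] at e
    exact (Complex.ofReal_injective e).symm
  · have : ∫ g, nr (𝒢.s g) η ^ 2 ∂(hs.lam y) = 0 := by
      refine integral_eq_zero_of_ae ?_
      filter_upwards [haar_ae hs y] with g hg
      have : nr (𝒢.s g) η = 0 := hη _ fun h => hy ⟨g, hg, h⟩
      simp [this]
    rw [this]
    exact norm_nonneg _

end Haar

/-! ### Sections of the bundle of translates of a vector -/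

section Translates

variable {X : Type} [TopologicalSpace X] {𝒢 : LCGroupoid X}
variable {E : Type} [NormedAddCommGroup E] [NormedSpace ℂ E] [HilbertCzeroModule X E]
  [CompleteSpace E] {A : GAction 𝒢 E} {η : E} {Φ : 𝒢.G → E}

/-- Continuity of `g ↦ g · η` in the topology of the bundle. -/
lemma isOpen_near (hΦ : ∀ g, Rel A g η (Φ g)) (p : E) {ε : ℝ} (hε : 0 < ε) :
    IsOpen {g | nr (𝒢.r g) (Φ g - p) < ε} := by
  let _ : TopologicalSpace (TotalP X E) := topEP X E
  have hhat : Continuous fun y : X => (⟨y, fibMk X E y η⟩ : TotalP X E) := by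
    refine continuous_generateFrom_iff.2 ?_
    rintro _ ⟨U, q, δ, hU, hδ, rfl⟩
    have : (fun y : X => (⟨y, fibMk X E y η⟩ : TotalP X E)) ⁻¹'
        {e : TotalP X E | e.1 ∈ U ∧ fibNormQ X E e.1 (e.2 - fibMk X E e.1 q) < δ} =
        U ∩ {y | nr y (η - q) < δ} := by
      ext y
      simp only [Set.mem_preimage, Set.mem_ofPred_eq, Set.mem_inter_iff, ← fibMk_sub, fibNormQ_fibMk]
    rw [this]
    exact hU.inter (isOpen_lt (continuous_nr _) continuous_const)
  have hθ : Continuous fun g : 𝒢.G =>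
      (⟨(g, ⟨𝒢.s g, fibMk X E (𝒢.s g) η⟩), rfl⟩ : {q : 𝒢.G × TotalP X E // 𝒢.s q.1 = q.2.1}) :=
    (continuous_id.prodMk (hhat.comp 𝒢.s_cont)).subtype_mk _
  have hact : Continuous fun g : 𝒢.G =>
      (⟨𝒢.r g, A.act g (fibMk X E (𝒢.s g) η)⟩ : TotalP X E) := A.act_cont.comp hθ
  have hop : IsOpen {e : TotalP X E | e.1 ∈ Set.univ ∧
      fibNormQ X E e.1 (e.2 - fibMk X E e.1 p) < ε} :=
    TopologicalSpace.isOpen_generateFrom_of_mem ⟨Set.univ, p, ε, isOpen_univ, hε, rfl⟩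
  convert hop.preimage hact using 1
  ext g
  simp only [Set.mem_preimage, Set.mem_ofPred_eq, Set.mem_univ, true_and]
  rw [hΦ g, ← fibMk_sub, fibNormQ_fibMk]

lemma continuous_coef (hΦ : ∀ g, Rel A g η (Φ g)) (p : E) :
    Continuous fun g => ip (𝒢.r g) (Φ g) p := by
  refine continuous_iff_continuousAt.2 fun g₀ => Metric.tendsto_nhds.2 fun ε hε => ?_
  have hδ : 0 < ε / 2 / (‖p‖ + 1) := by positivity
  have h1 : ∀ᶠ g in nhds g₀, nr (𝒢.r g) (Φ g - Φ g₀) < ε / 2 / (‖p‖ + 1) :=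
    (isOpen_near hΦ (Φ g₀) hδ).mem_nhds (by simpa [nr_zero] using hδ)
  have h2 : ∀ᶠ g in nhds g₀, dist (ip (𝒢.r g) (Φ g₀) p) (ip (𝒢.r g₀) (Φ g₀) p) < ε / 2 :=
    Metric.tendsto_nhds.1 (((continuous_ip (Φ g₀) p).comp 𝒢.r_cont).tendsto g₀) _ (half_pos hε)
  filter_upwards [h1, h2] with g hg1 hg2
  have h3 : dist (ip (𝒢.r g) (Φ g) p) (ip (𝒢.r g) (Φ g₀) p) ≤ ε / 2 := by
    rw [dist_eq_norm, ← ip_sub_left]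
    refine (norm_ip_le _ _ _).trans ?_
    calc nr (𝒢.r g) (Φ g - Φ g₀) * nr (𝒢.r g) p ≤ ε / 2 / (‖p‖ + 1) * (‖p‖ + 1) := by
          refine mul_le_mul hg1.le ((nr_le_norm _ _).trans (by linarith)) (nr_nonneg _ _) hδ.le
      _ = ε / 2 := by field_simp
  calc _ ≤ _ + _ := dist_triangle _ _ _
    _ < ε / 2 + ε / 2 := add_lt_add_of_le_of_lt h3 hg2
    _ = ε := add_halves ε

lemma norm_coef_le (hΦ : ∀ g, Rel A g η (Φ g)) (p : E) (g : 𝒢.G) :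
    ‖ip (𝒢.r g) (Φ g) p‖ ≤ nr (𝒢.s g) η * nr (𝒢.r g) p := by
  rw [← (hΦ g).nr]
  exact norm_ip_le _ _ _

/-- `g · (h · η) = (g h) · η`. -/
lemma rel_translate (hΦ : ∀ g, Rel A g η (Φ g)) {g h : 𝒢.G} (hr : 𝒢.r h = 𝒢.r g) :
    Rel A g (Φ (𝒢.mul (𝒢.inv g) h)) (Φ h) := by
  have hc : 𝒢.s (𝒢.inv g) = 𝒢.r h := by rw [𝒢.s_inv, hr]
  have hc' : 𝒢.s g = 𝒢.r (𝒢.mul (𝒢.inv g) h) := by rw [𝒢.r_mul _ _ hc, 𝒢.r_inv]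
  have hmul : 𝒢.mul g (𝒢.mul (𝒢.inv g) h) = h := by
    rw [← 𝒢.mul_assoc _ _ _ (𝒢.r_inv g).symm hc, 𝒢.mul_inv, ← hr, 𝒢.unit_mul]
  obtain ⟨t, ht⟩ := Rel.exists_right A g (Φ (𝒢.mul (𝒢.inv g) h))
  have h1 := Rel.mul hc' (hΦ _) ht
  rw [hmul] at h1
  refine ht.congr (by rw [sub_self, nr_zero]) ?_
  rw [← hr]
  exact h1.unique (hΦ h)

end Translates

/-! ### The adjoint pair attached to a compactly supported vector -/

section Pair

open MeasureTheory

variable {X : Type} [TopologicalSpace X] [T2Space X] [LocallyCompactSpace X]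
  {𝒢 : LCGroupoid X} {hs : HaarSystem X 𝒢}
variable {E M : Type} [NormedAddCommGroup E] [NormedSpace ℂ E] [HilbertCzeroModule X E]
  [CompleteSpace E] [NormedAddCommGroup M] [NormedSpace ℂ M] [HilbertCzeroModule X M]
  [CompleteSpace M] {A : GAction 𝒢 E} {AM : GAction 𝒢 M} {η : E} {Φ : 𝒢.G → E} {L : Set X}

lemma ip_emb (d : PGData 𝒢 hs M) (F₁ F₂ : CcFun X 𝒢) (y : X) :
    ip y (d.emb F₁) (d.emb F₂) = ∫ g, conj (F₁.1 g) * F₂.1 g ∂(hs.lam y) := d.emb_inner F₁ F₂ y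

/-- The function `g ↦ ⟨g · η, p⟩ k(r g)` in `C_c(G)`. -/
def coef (hL : IsCompact L) (hη : ∀ x ∉ L, nr x η = 0) (hΦ : ∀ g, Rel A g η (Φ g)) (p : E)
    (k : C₀(X, ℂ)) (hk : HasCompactSupport k) : CcFun X 𝒢 :=
  ⟨fun g => ip (𝒢.r g) (Φ g) p * k (𝒢.r g),
    (continuous_coef hΦ p).mul (k.continuous.comp 𝒢.r_cont),
    hasCompactSupport_of_proper hL hk
      (fun g hg => by rw [image_eq_zero_of_notMem_tsupport hg, mul_zero])
      (fun g hg => by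
        have := norm_coef_le hΦ p g
        rw [hη _ hg, zero_mul] at this
        rw [norm_le_zero_iff.1 this, zero_mul])⟩

lemma nr_coef_le (d : PGData 𝒢 hs M) (hL : IsCompact L) (hη : ∀ x ∉ L, nr x η = 0)
    (hΦ : ∀ g, Rel A g η (Φ g)) :
    ∃ C : ℝ, 0 ≤ C ∧ ∀ (p : E) (k : C₀(X, ℂ)) (hk : HasCompactSupport k) (y : X),
      nr y (d.emb (coef hL hη hΦ p k hk)) ≤ C * (‖k y‖ * nr y p) := by
  obtain ⟨C, hC, hCb⟩ := weight_bdd hs hL hη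
  refine ⟨Real.sqrt C, Real.sqrt_nonneg _, fun p k hk y => ?_⟩
  set F := coef hL hη hΦ p k hk with hF
  have hFb : ∀ g, ‖F.1 g‖ ≤ nr (𝒢.s g) η * (‖k (𝒢.r g)‖ * nr (𝒢.r g) p) := by
    intro g
    have h1 : F.1 g = ip (𝒢.r g) (Φ g) p * k (𝒢.r g) := rfl
    rw [h1, norm_mul]
    calc _ ≤ nr (𝒢.s g) η * nr (𝒢.r g) p * ‖k (𝒢.r g)‖ :=
          mul_le_mul_of_nonneg_right (norm_coef_le hΦ p g) (norm_nonneg _)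
      _ = _ := by ring
  have h0 : 0 ≤ ‖k y‖ * nr y p := mul_nonneg (norm_nonneg _) (nr_nonneg _ _)
  rw [← sq_le_sq₀ (nr_nonneg _ _) (mul_nonneg (Real.sqrt_nonneg _) h0), mul_pow, Real.sq_sqrt hC,
    ← norm_ip_self, ip_emb]
  calc ‖∫ g, conj (F.1 g) * F.1 g ∂(hs.lam y)‖
      ≤ ∫ g, nr (𝒢.s g) η ^ 2 * (‖k y‖ * nr y p) ^ 2 ∂(hs.lam y) := by
        refine norm_integral_le_of_norm_le ((weight_integrable hs hL hη y).mul_const _) ?_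
        filter_upwards [haar_ae hs y] with g hg
        have h2 := hFb g
        rw [norm_mul, Complex.norm_conj, ← sq, ← mul_pow]
        rw [hg] at h2
        exact pow_le_pow_left₀ (norm_nonneg _) h2 2
    _ = (∫ g, nr (𝒢.s g) η ^ 2 ∂(hs.lam y)) * (‖k y‖ * nr y p) ^ 2 := integral_mul_const _ _
    _ ≤ C * (‖k y‖ * nr y p) ^ 2 := mul_le_mul_of_nonneg_right (hCb y) (sq_nonneg _)

lemma emb_dense' (d : PGData 𝒢 hs M) (q : M) (ε : ℝ) (hε : 0 < ε) : ∃ F, ‖q - d.emb F‖ < ε :=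
  d.emb_dense q ε hε

/-- Multiplying by a function which is `1` at `y` does not affect the integral over `G^y`. -/
lemma ip_emb_coef (d : PGData 𝒢 hs M) (hL : IsCompact L) (hη : ∀ x ∉ L, nr x η = 0)
    (hΦ : ∀ g, Rel A g η (Φ g)) (F : CcFun X 𝒢) (p : E) (k : C₀(X, ℂ)) (hk : HasCompactSupport k)
    {y : X} (hky : k y = 1) : ip y (d.emb F) (d.emb (coef hL hη hΦ p k hk)) =
      ∫ g, conj (F.1 g) * ip (𝒢.r g) (Φ g) p ∂(hs.lam y) := by
  rw [ip_emb]
  refine integral_congr_ae ?_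
  filter_upwards [haar_ae hs y] with g hg
  change conj (F.1 g) * (ip (𝒢.r g) (Φ g) p * k (𝒢.r g)) = _
  rw [hg, hky, mul_one]

/-- The analysis operator `p ↦ (g ↦ ⟨g · η, p⟩)`. -/
lemma exists_analysis (d : PGData 𝒢 hs M) (hL : IsCompact L) (hη : ∀ x ∉ L, nr x η = 0)
    (hΦ : ∀ g, Rel A g η (Φ g)) (p : E) :
    ∃ v : M, ∀ (F : CcFun X 𝒢) (y : X), ip y (d.emb F) v =
      ∫ g, conj (F.1 g) * ip (𝒢.r g) (Φ g) p ∂(hs.lam y) := by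
  obtain ⟨C, hC, hCb⟩ := nr_coef_le d hL hη hΦ
  refine exists_represent d.emb (emb_dense' d) _ fun ε hε => ?_
  have hδ : 0 < ε / (C + 1) := by positivity
  have hcpt : ∃ T : Set X, IsCompact T ∧ ∀ x ∉ T, nr x p ≤ ε / (C + 1) := by
    have h1 : Tendsto (fun x => ‖modIP X p p x‖) (cocompact X) (nhds 0) := by
      simpa using (modIP X p p).zero_at_infty'.norm
    obtain ⟨T, hT, hTs⟩ := mem_cocompact.1
      (h1.eventually_le_const (show 0 < (ε / (C + 1)) ^ 2 by positivity))
    refine ⟨T, hT, fun x hx => ?_⟩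
    have h2 : ‖ip x p p‖ ≤ (ε / (C + 1)) ^ 2 := hTs hx
    rw [norm_ip_self] at h2
    exact (sq_le_sq₀ (nr_nonneg _ _) hδ.le).1 h2
  obtain ⟨T, hT, hTp⟩ := hcpt
  obtain ⟨k, hk, hk1, hk2, -⟩ := exists_cutoff hT isOpen_univ (Set.subset_univ _)
  refine ⟨d.emb (coef hL hη hΦ p k hk), fun F y => ?_⟩
  obtain ⟨k', hk', hky'⟩ := exists_bump y
  rw [← ip_emb_coef d hL hη hΦ F p k' hk' hky', ← ip_sub_right]
  have hkk : HasCompactSupport (k - k' : C₀(X, ℂ)) :=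
    HasCompactSupport.intro (hk.isCompact.union hk'.isCompact) fun x hx => by
      rw [Set.mem_union, not_or] at hx
      rw [ZeroAtInftyContinuousMap.sub_apply, image_eq_zero_of_notMem_tsupport hx.1,
        image_eq_zero_of_notMem_tsupport hx.2, sub_zero]
  have e : d.emb (coef hL hη hΦ p k hk) - d.emb (coef hL hη hΦ p k' hk') =
      d.emb (coef hL hη hΦ p (k - k') hkk) := by
    rw [sub_eq_iff_eq_add]
    refine d.emb_add _ _ _ ?_
    funext g
    change ip (𝒢.r g) (Φ g) p * k (𝒢.r g) = ip (𝒢.r g) (Φ g) p * (k (𝒢.r g) - k' (𝒢.r g)) +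
      ip (𝒢.r g) (Φ g) p * k' (𝒢.r g)
    ring
  rw [e]
  refine (norm_ip_le _ _ _).trans ?_
  rw [mul_comm]
  refine mul_le_mul_of_nonneg_right ((hCb p _ hkk y).trans ?_) (nr_nonneg _ _)
  have hsub : ‖(k - k') y‖ * nr y p ≤ ε / (C + 1) := by
    rw [ZeroAtInftyContinuousMap.sub_apply, hky']
    by_cases hy : y ∈ T
    · rw [hk1 y hy]; simpa using hδ.le
    · obtain ⟨t, ht, ht0, ht1⟩ := hk2 y
      have : ‖k y - 1‖ ≤ 1 := by
        rw [ht, ← Complex.ofReal_one, ← Complex.ofReal_sub, Complex.norm_real, Real.norm_eq_abs,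
          abs_le]
        constructor <;> linarith
      exact (mul_le_of_le_one_left (nr_nonneg _ _) this).trans (hTp y hy)
  calc C * (‖(k - k') y‖ * nr y p) ≤ C * (ε / (C + 1)) := mul_le_mul_of_nonneg_left hsub hC
    _ ≤ ε := by rw [mul_div_assoc', div_le_iff₀ (by positivity)]; nlinarith

/-- The synthesis operator `F ↦ ∫ F(g) (g · η) dλ^y`, on `C_c(G)`: the integral is approximated by
finite sums by means of a partition of unity. -/
lemma exists_synthesis (hs : HaarSystem X 𝒢) (hΦ : ∀ g, Rel A g η (Φ g)) (F : CcFun X 𝒢) :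
    ∃ w : E, ∀ (p : E) (y : X), ip y p w =
      ∫ g, F.1 g * ip (𝒢.r g) p (Φ g) ∂(hs.lam y) := by
  obtain ⟨f, hf, hfc⟩ := F
  obtain ⟨C, hC, hCb⟩ := haar_bdd hs hf.norm hfc.norm
  refine exists_represent (fun p : E => p) (fun p ε hε => ⟨p, by simpa using hε⟩) _ fun ε hε => ?_
  have hδ : 0 < ε / (C + 1) := by positivity
  obtain ⟨t, ht⟩ := hfc.isCompact.elim_finite_subcover
    (fun g₀ : 𝒢.G => {g | nr (𝒢.r g) (Φ g - Φ g₀) < ε / (C + 1)})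
    (fun g₀ => isOpen_near hΦ _ hδ)
    (fun g _ => Set.mem_iUnion.2 ⟨g, by simpa [nr_zero] using hδ⟩)
  set e := t.equivFin.symm with he
  obtain ⟨ρ, hρ1, hρ2, hρ3, hρ4⟩ := exists_continuous_sum_one_of_isOpen_isCompact
    (s := fun i : Fin t.card => {g | nr (𝒢.r g) (Φ g - Φ (e i)) < ε / (C + 1)})
    (fun i => isOpen_near hΦ _ hδ) hfc.isCompact (by
      intro g hg
      obtain ⟨g₀, hg₀, h⟩ := Set.mem_iUnion₂.1 (ht hg)
      refine Set.mem_iUnion.2 ⟨e.symm ⟨g₀, hg₀⟩, ?_⟩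
      simpa using h)
  have hcont : ∀ i, Continuous fun g => (ρ i g : ℂ) * f g := fun i => by fun_prop
  have hcc : ∀ i, HasCompactSupport fun g => (ρ i g : ℂ) * f g := fun i => hfc.mul_left
  choose I hI using fun i => exists_haar_C0 hs (hcont i) (hcc i)
  refine ⟨∑ i, modSMul X (Φ (e i)) (I i), fun p y => ?_⟩
  have h1 : ip y p (∑ i, modSMul X (Φ (e i)) (I i)) =
      ∫ g, ∑ i, ip y p (Φ (e i)) * ((ρ i g : ℂ) * f g) ∂(hs.lam y) := by
    rw [ip_sum_right, integral_finsetSum _ fun i _ =>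
      (haar_integrable hs (hcont i) (hcc i) y).const_mul _]
    refine Finset.sum_congr rfl fun i _ => ?_
    rw [ip_msmul_right, hI, integral_const_mul]
  have hc2 : Continuous fun g => f g * ip (𝒢.r g) p (Φ g) := by
    have := Complex.continuous_conj.comp (continuous_coef hΦ p)
    refine hf.mul (this.congr fun g => ?_)
    exact ip_conj _ _ _
  rw [h1, ← integral_sub (integrable_finsetSum _ fun i _ =>
    (haar_integrable hs (hcont i) (hcc i) y).const_mul _)
    (haar_integrable hs hc2 hfc.mul_right y)]
  calc _ ≤ ∫ g, ‖f g‖ * (ε / (C + 1) * nr y p) ∂(hs.lam y) := by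
        refine norm_integral_le_of_norm_le
          ((haar_integrable_real hs hf.norm hfc.norm y).mul_const _) ?_
        filter_upwards [haar_ae hs y] with g hg
        by_cases hgt : g ∈ tsupport f
        · have hsum : ∑ i, ρ i g = 1 := by simpa using hρ2 hgt
          have hsumC : ∑ i, (ρ i g : ℂ) = 1 := by rw [← Complex.ofReal_sum, hsum]; simp
          have e1 : ∑ i, ip y p (Φ (e i)) * ((ρ i g : ℂ) * f g) - f g * ip (𝒢.r g) p (Φ g) =
              f g * ∑ i, (ρ i g : ℂ) * ip y p (Φ (e i) - Φ g) := by
            have : ∑ i, (ρ i g : ℂ) * ip y p (Φ (e i) - Φ g) =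
                ∑ i, (ρ i g : ℂ) * ip y p (Φ (e i)) - ip y p (Φ g) := by
              rw [← one_mul (ip y p (Φ g)), ← hsumC, Finset.sum_mul, ← Finset.sum_sub_distrib]
              simp only [ip_sub_right, mul_sub]
            rw [this, hg, mul_sub, Finset.mul_sum]
            congr 1
            exact Finset.sum_congr rfl fun i _ => by ring
          rw [e1, norm_mul]
          refine mul_le_mul_of_nonneg_left ?_ (norm_nonneg _)
          calc ‖∑ i, (ρ i g : ℂ) * ip y p (Φ (e i) - Φ g)‖
              ≤ ∑ i, ‖(ρ i g : ℂ) * ip y p (Φ (e i) - Φ g)‖ := norm_sum_le _ _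
            _ ≤ ∑ i, ρ i g * (ε / (C + 1) * nr y p) := by
                refine Finset.sum_le_sum fun i _ => ?_
                rw [norm_mul, Complex.norm_real, Real.norm_of_nonneg (hρ3 i g).1]
                by_cases h0 : ρ i g = 0
                · rw [h0, zero_mul, zero_mul]
                refine mul_le_mul_of_nonneg_left ?_ (hρ3 i g).1
                have h2 : nr (𝒢.r g) (Φ g - Φ (e i)) < ε / (C + 1) :=
                  hρ1 i (subset_tsupport _ h0)
                rw [hg, nr_sub_comm] at h2
                refine (norm_ip_le _ _ _).trans ?_
                rw [mul_comm]
                exact mul_le_mul_of_nonneg_right h2.le (nr_nonneg _ _)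
            _ = ε / (C + 1) * nr y p := by rw [← Finset.sum_mul, hsum, one_mul]
        · rw [image_eq_zero_of_notMem_tsupport hgt]
          simp
    _ = (∫ g, ‖f g‖ ∂(hs.lam y)) * (ε / (C + 1) * nr y p) := integral_mul_const _ _
    _ ≤ C * (ε / (C + 1) * nr y p) := mul_le_mul_of_nonneg_right (hCb y)
        (mul_nonneg hδ.le (nr_nonneg _ _))
    _ = C * (ε / (C + 1)) * nr y p := by ring
    _ ≤ ε * nr y p := by
        refine mul_le_mul_of_nonneg_right ?_ (nr_nonneg _ _)
        rw [mul_div_assoc', div_le_iff₀ (by positivity)]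
        nlinarith

end Pair

/-! ### Approximate units and the synthesis operator -/

section PairOperators

open MeasureTheory

variable {X : Type} [TopologicalSpace X] [T2Space X] [LocallyCompactSpace X]
  {𝒢 : LCGroupoid X} {hs : HaarSystem X 𝒢}
variable {E M : Type} [NormedAddCommGroup E] [NormedSpace ℂ E] [HilbertCzeroModule X E]
  [CompleteSpace E] [NormedAddCommGroup M] [NormedSpace ℂ M] [HilbertCzeroModule X M]
  [CompleteSpace M] {A : GAction 𝒢 E} {AM : GAction 𝒢 M} {η : E} {Φ : 𝒢.G → E} {L : Set X}

/-- Approximate units: a positive function in `C_c(G)`, supported in a given neighbourhood of the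
units, whose integrals over the fibres `G^y` are at most `1`, with equality for `y ∈ L`. -/
lemma exists_approx_unit (hs : HaarSystem X 𝒢) (hL : IsCompact L) {U : Set 𝒢.G} (hU : IsOpen U)
    (hunit : ∀ x ∈ L, 𝒢.unit x ∈ U) :
    ∃ f : 𝒢.G → ℝ, Continuous f ∧ HasCompactSupport f ∧ (∀ g, 0 ≤ f g) ∧ (∀ g ∉ U, f g = 0) ∧
      (∀ y, ∫ g, f g ∂(hs.lam y) ≤ 1) ∧ (∀ y ∈ L, ∫ g, f g ∂(hs.lam y) = 1) := by
  obtain ⟨f, hf1, hfc, hfU, hf01⟩ := exists_continuousMap_one_of_isCompact_subset_isOpen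
    (hL.image 𝒢.unit_embedding.continuous) hU (by rintro _ ⟨x, hx, rfl⟩; exact hunit x hx)
  obtain ⟨I, hI⟩ := exists_haar_C0 hs (f := fun g => (f g : ℂ)) (by fun_prop)
    (HasCompactSupport.comp_left (g := fun t : ℝ => (t : ℂ)) hfc rfl)
  have hI' : ∀ y, (I y).re = ∫ g, f g ∂(hs.lam y) := fun y => by
    rw [hI, integral_complex_ofReal, Complex.ofReal_re]
  have hpos : ∀ y ∈ L, 0 < (I y).re := by
    intro y hy
    rw [hI', integral_pos_iff_support_of_nonneg (fun g => (hf01 g).1)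
      (haar_integrable_real hs f.continuous hfc y), pos_iff_ne_zero]
    refine hs.full y _ (isOpen_ne_fun f.continuous continuous_const) ⟨𝒢.unit y, ?_, 𝒢.r_unit y⟩
    have : f (𝒢.unit y) = 1 := hf1 ⟨y, hy, rfl⟩
    simp [this]
  have hIc : Continuous fun y => (I y).re := Complex.continuous_re.comp I.continuous
  obtain ⟨m, hm, hmL⟩ : ∃ m : ℝ, 0 < m ∧ ∀ y ∈ L, m ≤ (I y).re := by
    rcases L.eq_empty_or_nonempty with rfl | hne
    · exact ⟨1, one_pos, fun y hy => absurd hy (Set.notMem_empty y)⟩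
    · obtain ⟨y₀, hy₀, hmin⟩ := hL.exists_isMinOn hne hIc.continuousOn
      exact ⟨(I y₀).re, hpos y₀ hy₀, fun y hy => hmin hy⟩
  have hmax : ∀ y, 0 < max (I y).re m := fun y => lt_max_of_lt_right hm
  have hquot : ∀ y, ∫ g, f g * (max (I (𝒢.r g)).re m)⁻¹ ∂(hs.lam y) =
      (I y).re * (max (I y).re m)⁻¹ := by
    intro y
    rw [hI', ← integral_mul_const]
    refine integral_congr_ae ?_
    filter_upwards [haar_ae hs y] with g hg
    rw [hg, hI']
  refine ⟨fun g => f g * (max (I (𝒢.r g)).re m)⁻¹, ?_,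
    HasCompactSupport.mul_right (f := f) hfc,
    fun g => mul_nonneg (hf01 g).1 (inv_nonneg.2 (hmax _).le), fun g hg => ?_, fun y => ?_,
    fun y hy => ?_⟩
  · exact f.continuous.mul (((hIc.comp 𝒢.r_cont).max continuous_const).inv₀ fun g => (hmax _).ne')
  · have : f g = 0 := by
      by_contra h
      exact hg (hfU (subset_tsupport _ h))
    change f g * _ = 0
    rw [this, zero_mul]
  · rw [hquot, ← div_eq_mul_inv, div_le_one (hmax y)]
    exact le_max_left _ _
  · rw [hquot, max_eq_left (hmL y hy), mul_inv_cancel₀ (hpos y hy).ne']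

/-- The operators attached to a compactly supported vector `η`: the analysis operator
`V p = (g ↦ ⟨g · η, p⟩)`, and its adjoint, the synthesis operator `W F = ∫ F(g) (g · η)`. Letting
`F` run through approximate units shows that `η` is in the closure of the range of `W`. -/
lemma exists_pair (d : PGData 𝒢 hs M) (hAM : IsNaturalPGAction d AM) (A : GAction 𝒢 E)
    (hL : IsCompact L) (hη : ∀ x ∉ L, nr x η = 0) :
    ∃ (V : E →L[ℂ] M) (W : M →L[ℂ] E), IsAdj X V W ∧ Equi A AM V ∧
      ∀ ε : ℝ, 0 < ε → ∃ q, ‖W q - η‖ ≤ ε := by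
  choose Φ hΦ using fun g => Rel.exists_right A g η
  obtain ⟨C, hC, hCb⟩ := nr_coef_le d hL hη hΦ
  choose V hV using exists_analysis d hL hη hΦ
  -- locally, `V p` agrees with the function `g ↦ ⟨g · η, p⟩ k(r g)`
  have hVloc : ∀ p (k : C₀(X, ℂ)) (hk : HasCompactSupport k) (y : X), k y = 1 →
      nr y (V p - d.emb (coef hL hη hΦ p k hk)) = 0 := by
    intro p k hk y hky
    refine le_antisymm (nr_le_of_dual d.emb (emb_dense' d) le_rfl fun F => ?_) (nr_nonneg _ _)
    rw [ip_sub_right, hV, ip_emb_coef d hL hη hΦ F p k hk hky, sub_self]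
    simp
  have hVb : ∀ (y : X) p, nr y (V p) ≤ C * nr y p := by
    intro y p
    obtain ⟨k, hk, hky⟩ := exists_bump y
    rw [nr_eq_of_nr_sub (hVloc p k hk y hky)]
    simpa [hky] using hCb p k hk y
  have hW0 : ∀ F : CcFun X 𝒢, ∃ w : E, ∀ (p : E) (y : X), ip y p w = ip y (V p) (d.emb F) := by
    intro F
    obtain ⟨w, hw⟩ := exists_synthesis hs hΦ F
    refine ⟨w, fun p y => ?_⟩
    rw [hw, ← ip_conj, hV, ← integral_conj]
    refine integral_congr_ae (Eventually.of_forall fun g => ?_)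
    simp only [map_mul, Complex.conj_conj, ip_conj]
  have hWex : ∀ q : M, ∃ w : E, ∀ (p : E) (y : X), ip y p w = ip y (V p) q := by
    intro q
    refine exists_represent (fun p : E => p) (fun p ε hε => ⟨p, by simpa using hε⟩) _ fun ε hε => ?_
    obtain ⟨F, hF⟩ := d.emb_dense q (ε / (C + 1)) (by positivity)
    obtain ⟨w, hw⟩ := hW0 F
    refine ⟨w, fun p y => ?_⟩
    rw [hw, ← ip_sub_right]
    refine (norm_ip_le _ _ _).trans ?_
    have h1 : nr y (d.emb F - q) ≤ ε / (C + 1) := by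
      rw [nr_sub_comm]
      exact (nr_le_norm _ _).trans hF.le
    have h2 : C * (ε / (C + 1)) ≤ ε := by
      rw [mul_div_assoc', div_le_iff₀ (by positivity)]; nlinarith
    calc nr y (V p) * nr y (d.emb F - q) ≤ C * nr y p * (ε / (C + 1)) :=
          mul_le_mul (hVb y p) h1 (nr_nonneg _ _) (mul_nonneg hC (nr_nonneg _ _))
      _ = C * (ε / (C + 1)) * nr y p := by ring
      _ ≤ ε * nr y p := mul_le_mul_of_nonneg_right h2 (nr_nonneg _ _)
  choose W hW using hWex
  have hadj : IsAdj X V W := fun x p q => (hW q p x).symm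
  obtain ⟨V', W', hV', hW'⟩ := hadj.exists_clm hC hVb
  refine ⟨V', W', fun x p q => by rw [hV', hW', hadj], fun g p p' h => ?_, fun ε hε => ?_⟩
  · rw [hV', hV']
    obtain ⟨k, hk, hk1, -, -⟩ := exists_cutoff (Set.toFinite {𝒢.s g, 𝒢.r g}).isCompact isOpen_univ
      (Set.subset_univ _)
    have hks : k (𝒢.s g) = 1 := hk1 _ (by simp)
    have hkr : k (𝒢.r g) = 1 := hk1 _ (by simp)
    have hF : Rel AM g (d.emb (coef hL hη hΦ p k hk)) (d.emb (coef hL hη hΦ p' k hk)) := by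
      refine hAM g _ _ fun h' hr => ?_
      have hc : 𝒢.s (𝒢.inv g) = 𝒢.r h' := by rw [𝒢.s_inv, hr]
      change ip (𝒢.r h') (Φ h') p' * k (𝒢.r h') =
        ip (𝒢.r (𝒢.mul (𝒢.inv g) h')) (Φ (𝒢.mul (𝒢.inv g) h')) p * k (𝒢.r (𝒢.mul (𝒢.inv g) h'))
      rw [𝒢.r_mul _ _ hc, 𝒢.r_inv, hr, hks, hkr, (rel_translate hΦ hr).ip h]
    refine hF.congr ?_ ?_
    · rw [nr_sub_comm]; exact hVloc p k hk _ hks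
    · rw [nr_sub_comm]; exact hVloc p' k hk _ hkr
  · obtain ⟨f, hf, hfc, hf0, hfU, hf1, hfL⟩ := exists_approx_unit hs hL (isOpen_near hΦ η hε)
      (fun x _ => by
        have h1 := (hΦ (𝒢.unit x)).unique (Rel.unit A x η)
        change nr _ _ < ε
        rw [h1]
        exact hε)
    have hfcC : HasCompactSupport fun g => (f g : ℂ) :=
      HasCompactSupport.comp_left (g := fun t : ℝ => (t : ℂ)) hfc rfl
    have hfC : Continuous fun g => (f g : ℂ) := by fun_prop
    set F : CcFun X 𝒢 := ⟨fun g => (f g : ℂ), hfC, hfcC⟩ with hFdef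
    refine ⟨d.emb F, ?_⟩
    rw [hW']
    have hWF : ∀ p y, ip y p (W (d.emb F)) = ∫ g, (f g : ℂ) * ip (𝒢.r g) p (Φ g) ∂(hs.lam y) := by
      intro p y
      rw [hW, ← ip_conj, hV, ← integral_conj]
      refine integral_congr_ae (Eventually.of_forall fun g => ?_)
      simp only [map_mul, Complex.conj_conj, ip_conj, hFdef]
    set δ := W (d.emb F) - η with hδ
    refine norm_le_of_nr_le X hε.le fun y => ?_
    refine nr_le_of_dual (fun p : E => p) (fun p ε hε => ⟨p, by simpa using hε⟩) hε.le fun p => ?_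
    have hη' : ip y p η = ∫ g, (f g : ℂ) * ip (𝒢.r g) p η ∂(hs.lam y) := by
      have h1 : ∫ g, (f g : ℂ) * ip (𝒢.r g) p η ∂(hs.lam y) =
          ((∫ g, f g ∂(hs.lam y) : ℝ) : ℂ) * ip y p η := by
        rw [← integral_complex_ofReal, ← integral_mul_const]
        refine integral_congr_ae ?_
        filter_upwards [haar_ae hs y] with g hg
        rw [hg]
      rw [h1]
      by_cases hy : y ∈ L
      · rw [hfL y hy]; simp
      · have := norm_ip_le y p η
        rw [hη y hy, mul_zero] at this
        rw [norm_le_zero_iff.1 this, mul_zero]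
    have hc1 : Continuous fun g => ip (𝒢.r g) p (Φ g) :=
      (Complex.continuous_conj.comp (continuous_coef hΦ p)).congr fun g => ip_conj _ _ _
    have hc2 : Continuous fun g => ip (𝒢.r g) p η := (continuous_ip p η).comp 𝒢.r_cont
    have i1 : Integrable (fun g => (f g : ℂ) * ip (𝒢.r g) p (Φ g)) (hs.lam y) :=
      haar_integrable hs (hfC.mul hc1) hfcC.mul_right y
    have i2 : Integrable (fun g => (f g : ℂ) * ip (𝒢.r g) p η) (hs.lam y) :=
      haar_integrable hs (hfC.mul hc2) hfcC.mul_right y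
    rw [hδ, ip_sub_right, hWF, hη', ← integral_sub i1 i2]
    calc _ ≤ ∫ g, f g * (ε * nr y p) ∂(hs.lam y) := by
          refine norm_integral_le_of_norm_le ((haar_integrable_real hs hf hfc y).mul_const _) ?_
          filter_upwards [haar_ae hs y] with g hg
          rw [← mul_sub, ← ip_sub_right, norm_mul, Complex.norm_real, Real.norm_of_nonneg (hf0 g)]
          by_cases hg0 : f g = 0
          · rw [hg0, zero_mul, zero_mul]
          refine mul_le_mul_of_nonneg_left ?_ (hf0 g)
          have h2 : nr (𝒢.r g) (Φ g - η) < ε := by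
            by_contra h3
            exact hg0 (hfU g h3)
          rw [hg] at h2 ⊢
          refine (norm_ip_le _ _ _).trans ?_
          rw [mul_comm]
          exact mul_le_mul_of_nonneg_right h2.le (nr_nonneg _ _)
      _ = (∫ g, f g ∂(hs.lam y)) * (ε * nr y p) := integral_mul_const _ _
      _ ≤ ε * nr y p := mul_le_of_le_one_left (mul_nonneg hε.le (nr_nonneg _ _)) (hf1 y)

end PairOperators

/-! ### Operators with dense range -/

section DenseOperators

variable {X : Type} [TopologicalSpace X] [T2Space X] [LocallyCompactSpace X]
  {𝒢 : LCGroupoid X} {hs : HaarSystem X 𝒢}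
variable {E M N S : Type} [NormedAddCommGroup E] [NormedSpace ℂ E] [HilbertCzeroModule X E]
  [CompleteSpace E] [NormedAddCommGroup M] [NormedSpace ℂ M] [HilbertCzeroModule X M]
  [CompleteSpace M] [NormedAddCommGroup N] [NormedSpace ℂ N] [HilbertCzeroModule X N]
  [CompleteSpace N] [NormedAddCommGroup S] [NormedSpace ℂ S] [HilbertCzeroModule X S]
  [CompleteSpace S]
  {A : GAction 𝒢 E} {AM : GAction 𝒢 M} {AN : GAction 𝒢 N} {AS : GAction 𝒢 S}

variable (X E) in
/-- A separable Hilbert module has a dense sequence of compactly supported elements. -/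
lemma exists_dense_seq [SecondCountableTopology E] :
    ∃ e : ℕ → E, DenseRange e ∧ ∀ k, ∃ L : Set X, IsCompact L ∧ ∀ x ∉ L, nr x (e k) = 0 := by
  set D : Set E := {p | ∃ L : Set X, IsCompact L ∧ ∀ x ∉ L, nr x p = 0} with hD
  have hdense : Dense D := by
    refine Metric.dense_iff.2 fun p ε hε => ?_
    have h1 : Tendsto (fun x => ‖modIP X p p x‖) (cocompact X) (nhds 0) := by
      simpa using (modIP X p p).zero_at_infty'.norm
    obtain ⟨T, hT, hTs⟩ := mem_cocompact.1
      (h1.eventually_le_const (show 0 < (ε / 4) ^ 2 by positivity))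
    have hTp : ∀ x ∉ T, nr x p ≤ ε / 4 := fun x hx => by
      have h2 : ‖ip x p p‖ ≤ (ε / 4) ^ 2 := hTs hx
      rw [norm_ip_self] at h2
      exact (sq_le_sq₀ (nr_nonneg _ _) (by positivity)).1 h2
    obtain ⟨k, hk, hk1, hk2, -⟩ := exists_cutoff hT isOpen_univ (Set.subset_univ _)
    refine ⟨modSMul X p k, ?_, tsupport k, hk, fun x hx => ?_⟩
    · rw [Metric.mem_ball, dist_eq_norm, ← norm_neg, neg_sub]
      refine lt_of_le_of_lt (norm_le_of_nr_le X (c := ε / 2) (by positivity) fun x => ?_)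
        (half_lt_self hε)
      by_cases hx : x ∈ T
      · have h3 := norm_ip_self x (p - modSMul X p k)
        rw [ip_sub_right, ip_msmul_right, hk1 x hx, mul_one, sub_self, norm_zero] at h3
        rw [pow_eq_zero_iff two_ne_zero |>.1 h3.symm]
        positivity
      · obtain ⟨t, ht, ht0, ht1⟩ := hk2 x
        rw [sub_eq_add_neg]
        refine (nr_add_le _ _ _).trans ?_
        rw [nr_neg, nr_msmul, ht, Complex.norm_real, Real.norm_of_nonneg ht0]
        nlinarith [hTp x hx, nr_nonneg x p]
    · rw [nr_msmul, image_eq_zero_of_notMem_tsupport hx, norm_zero, zero_mul]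
  have : Nonempty D := ⟨⟨0, ∅, isCompact_empty, fun x _ => nr_zero x⟩⟩
  exact ⟨fun n => (TopologicalSpace.denseSeq D n : E),
    hdense.denseRange_val.comp (TopologicalSpace.denseRange_denseSeq D) continuous_subtype_val,
    fun k => (TopologicalSpace.denseSeq D k).2⟩

/-- A map with an adjoint left inverse is an isometry, so both are contractions. -/
lemma exists_isometry_clm {J : E → N} {J' : N → E} (h : IsAdj X J J') (hJ : ∀ p, J' (J p) = p) :
    ∃ (B : E →L[ℂ] N) (B' : N →L[ℂ] E), (∀ p, B p = J p) ∧ (∀ q, B' q = J' q) ∧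
      ‖B‖ ≤ 1 ∧ ‖B'‖ ≤ 1 := by
  have hn : ∀ (x : X) p, nr x (J p) = nr x p := fun x p => by
    unfold nr
    rw [h, hJ]
  obtain ⟨B, B', hB, hB'⟩ := h.exists_clm zero_le_one fun x p => by rw [hn, one_mul]
  have hB1 : ‖B‖ ≤ 1 := B.opNorm_le_bound zero_le_one fun p => by
    rw [one_mul, hB]
    exact norm_le_of_nr_le X (norm_nonneg _) fun x => by rw [hn]; exact nr_le_norm x p
  refine ⟨B, B', hB, hB', hB1, B'.opNorm_le_bound zero_le_one fun q => ?_⟩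
  rw [one_mul]
  refine norm_le_of_nr_le X (norm_nonneg _) fun x => ?_
  refine nr_le_of_dual (fun p : E => p) (fun p ε hε => ⟨p, by simpa using hε⟩) (norm_nonneg _)
    fun p => ?_
  rw [hB', ← h]
  refine (norm_ip_le _ _ _).trans ?_
  rw [hn, mul_comm]
  exact mul_le_mul_of_nonneg_right (nr_le_norm x q) (nr_nonneg _ _)

/-- The coordinate projections of `⊕_{i=1}^∞ M` and their adjoints, the coordinate embeddings. -/
lemma exists_coordinates (D : InftySumData X (fun _ => M) N)
    (hD : IsCoordinateInftyAction D (fun _ => AM) AN) :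
    ∃ (J : ℕ → M →L[ℂ] N) (Q : ℕ → N →L[ℂ] M), (∀ n, IsAdj X (J n) (Q n)) ∧
      (∀ n, Equi AM AN (J n)) ∧ (∀ n, ‖J n‖ ≤ 1) ∧ (∀ n, ‖Q n‖ ≤ 1) ∧
      (∀ n m ξ, Q n (J m ξ) = if n = m then ξ else 0) ∧
      (∀ z, HasSum (fun n => J n (Q n z)) z) := by
  have hex : ∀ (n : ℕ) (ξ : M), ∃ z : N, ∀ i, D.proj i z = if i = n then ξ else 0 := by
    intro n ξ
    refine D.proj_surjective (fun i => if i = n then ξ else 0) ?_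
    refine summable_of_ne_finset_zero (s := {n}) fun i hi => ?_
    rw [Finset.mem_singleton] at hi
    ext x
    exact (congrArg (fun q => ip x q q) (if_neg hi)).trans (ip_zero_right x (0 : M))
  choose j hj using hex
  have hadj : ∀ n, IsAdj X (j n) (D.proj n) := by
    intro n
    refine IsAdj.symm fun x z ξ => ?_
    have h1 := D.proj_inner z (j n ξ)
    have h2 : HasSum (fun i => modIP X (D.proj i z) (D.proj i (j n ξ))) (modIP X (D.proj n z) ξ) := by
      have h3 := hasSum_single (f := fun i => modIP X (D.proj i z) (D.proj i (j n ξ))) n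
        fun i hi => by
          ext x
          rw [hj, if_neg hi]
          exact ip_zero_right x _
      simpa only [hj, if_true] using h3
    exact DFunLike.congr_fun (h2.unique h1) x
  choose J Q hJ hQ hJ1 hQ1 using fun n => exists_isometry_clm (hadj n) fun ξ => by
    rw [hj, if_pos rfl]
  have hJQ : ∀ n, IsAdj X (J n) (Q n) := fun n x p q => by rw [hJ, hQ, hadj]
  have hEQ : ∀ n, Equi AN AM (Q n) := fun n g z z' h => by
    rw [hQ, hQ]
    exact hD g z z' h n
  have hQJ : ∀ n m ξ, Q n (J m ξ) = if n = m then ξ else 0 := fun n m ξ => by rw [hQ, hJ, hj]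
  refine ⟨J, Q, hJQ, fun n => (hEQ n).adjoint (hJQ n).symm, hJ1, hQ1, hQJ, fun z => ?_⟩
  -- `‖z - ∑ n ∈ s, J n (Q n z)‖²` is the norm of the remainder of the series `⟨z, z⟩`
  have hkey : ∀ s : Finset ℕ, ‖(∑ n ∈ s, J n (Q n z)) - z‖ =
      Real.sqrt ‖(∑ n ∈ s, modIP X (D.proj n z) (D.proj n z)) - modIP X z z‖ := by
    intro s
    rw [← norm_neg, neg_sub, HilbertCzeroModule.norm_eq (Y := X), ← norm_neg (_ - modIP X z z),
      neg_sub]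
    congr 2
    set δ := z - ∑ n ∈ s, J n (Q n z) with hδ
    have h0 : ∀ n ∈ s, Q n δ = 0 := by
      intro n hn
      rw [hδ, map_sub, map_sum]
      simp only [hQJ]
      rw [Finset.sum_ite_eq, if_pos hn, sub_self]
    ext x
    change ip x δ δ = _
    have h1 : ip x δ (∑ n ∈ s, J n (Q n z)) = 0 := by
      rw [ip_sum_right]
      refine Finset.sum_eq_zero fun n hn => ?_
      rw [← (hJQ n).symm, h0 n hn, ip_zero_left]
    have h2 : ip x (∑ n ∈ s, J n (Q n z)) z = ∑ n ∈ s, ip x (D.proj n z) (D.proj n z) := by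
      rw [← ip_conj, ip_sum_right, map_sum]
      refine Finset.sum_congr rfl fun n _ => ?_
      rw [ip_conj, hJQ, hQ]
    have h3 : ip x δ δ = ip x δ z := by
      conv_lhs => rw [hδ, ip_sub_right, ← hδ, h1, sub_zero]
    have h4 : (∑ n ∈ s, modIP X (D.proj n z) (D.proj n z)) x =
        ∑ n ∈ s, ip x (D.proj n z) (D.proj n z) := by
      exact map_sum (⟨⟨fun f => f x, rfl⟩, fun _ _ => rfl⟩ : C₀(X, ℂ) →+ ℂ) _ _
    rw [h3, hδ, ip_sub_left, h2, ZeroAtInftyContinuousMap.sub_apply, h4]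
    rfl
  refine tendsto_iff_norm_sub_tendsto_zero.2 ?_
  have h5 := (Real.continuous_sqrt.tendsto _).comp
    (tendsto_iff_norm_sub_tendsto_zero.1 (D.proj_inner z z))
  rw [Real.sqrt_zero] at h5
  exact h5.congr fun s => (hkey s).symm

/-- The embeddings of the summands of `E ⊕ N` and their adjoints. -/
lemma exists_summands (D : SumData X E N S) (hD : IsCoordinateSumAction D A AN AS) :
    ∃ (J₁ : E →L[ℂ] S) (Q₁ : S →L[ℂ] E) (J₂ : N →L[ℂ] S) (Q₂ : S →L[ℂ] N),
      IsAdj X J₁ Q₁ ∧ IsAdj X J₂ Q₂ ∧ Equi A AS J₁ ∧ Equi AN AS J₂ ∧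
      ‖J₁‖ ≤ 1 ∧ ‖Q₁‖ ≤ 1 ∧ ‖J₂‖ ≤ 1 ∧ ‖Q₂‖ ≤ 1 ∧ (∀ q, Q₁ (J₂ q) = 0) ∧
      (∀ q, Q₂ (J₂ q) = q) ∧ ∀ x, ∃ p q, x = J₁ p + J₂ q := by
  choose π₁ π₂ hπ using D.total
  have hll : ∀ (x : X) p p', ip x (D.inl p) (D.inl p') = ip x p p' := fun x p p' =>
    DFunLike.congr_fun (D.inner_ll p p') x
  have hrr : ∀ (x : X) q q', ip x (D.inr q) (D.inr q') = ip x q q' := fun x q q' =>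
    DFunLike.congr_fun (D.inner_rr q q') x
  have hlr : ∀ (x : X) p q, ip x (D.inl p) (D.inr q) = 0 := fun x p q =>
    DFunLike.congr_fun (D.inner_lr p q) x
  have hrl : ∀ (x : X) p q, ip x (D.inr q) (D.inl p) = 0 := fun x p q => by
    rw [← ip_conj, hlr, map_zero]
  have h1 : IsAdj X D.inl π₁ := fun x p s => by
    conv_lhs => rw [hπ s, ip_add_right, hll, hlr, add_zero]
  have h2 : IsAdj X D.inr π₂ := fun x q s => by
    conv_lhs => rw [hπ s, ip_add_right, hrl, hrr, zero_add]
  obtain ⟨J₁, Q₁, hJ₁, hQ₁, hJ₁n, hQ₁n⟩ := exists_isometry_clm h1 fun p =>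
    eq_of_ip X fun x z => by rw [← h1, hll]
  obtain ⟨J₂, Q₂, hJ₂, hQ₂, hJ₂n, hQ₂n⟩ := exists_isometry_clm h2 fun p =>
    eq_of_ip X fun x z => by rw [← h2, hrr]
  refine ⟨J₁, Q₁, J₂, Q₂, fun x p q => by rw [hJ₁, hQ₁, h1], fun x p q => by rw [hJ₂, hQ₂, h2],
    fun g p p' h => by rw [hJ₁, hJ₁]; exact hD.1 g p p' h,
    fun g p p' h => by rw [hJ₂, hJ₂]; exact hD.2 g p p' h, hJ₁n, hQ₁n, hJ₂n, hQ₂n, ?_, ?_, ?_⟩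
  · exact fun q => eq_of_ip X fun x z => by rw [hQ₁, hJ₂, ← h1, hlr, ip_zero_right]
  · exact fun q => eq_of_ip X fun x z => by rw [hQ₂, hJ₂, ← h2, hrr]
  · exact fun s => ⟨π₁ s, π₂ s, by rw [hJ₁, hJ₂]; exact hπ s⟩

/-- Rescaling of `exists_pair` to contractions. -/
lemma exists_pair_contraction (d : PGData 𝒢 hs M) (hAM : IsNaturalPGAction d AM)
    (A : GAction 𝒢 E) {L : Set X} {η : E} (hL : IsCompact L) (hη : ∀ x ∉ L, nr x η = 0) :
    ∃ (V : E →L[ℂ] M) (W : M →L[ℂ] E), IsAdj X V W ∧ Equi A AM V ∧ ‖V‖ ≤ 1 ∧ ‖W‖ ≤ 1 ∧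
      ∀ ε : ℝ, 0 < ε → ∃ q, ‖W q - η‖ ≤ ε := by
  obtain ⟨V, W, hVW, hV, hW⟩ := exists_pair d hAM A hL hη
  set c : ℝ := 1 + ‖V‖ + ‖W‖ with hc
  have hc0 : 0 < c := by positivity
  have hn : ‖((c⁻¹ : ℝ) : ℂ)‖ = c⁻¹ := by
    rw [Complex.norm_real, Real.norm_of_nonneg (inv_nonneg.2 hc0.le)]
  refine ⟨((c⁻¹ : ℝ) : ℂ) • V, ((c⁻¹ : ℝ) : ℂ) • W, hVW.real_smul _, hV.smul _, ?_, ?_,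
    fun ε hε => ?_⟩
  · rw [norm_smul, hn, ← div_eq_inv_mul, div_le_one hc0]
    linarith [norm_nonneg W]
  · rw [norm_smul, hn, ← div_eq_inv_mul, div_le_one hc0]
    linarith [norm_nonneg V]
  · obtain ⟨q, hq⟩ := hW ε hε
    refine ⟨(c : ℂ) • q, ?_⟩
    have : (((c⁻¹ : ℝ) : ℂ) • W) ((c : ℂ) • q) = W q := by
      change ((c⁻¹ : ℝ) : ℂ) • W ((c : ℂ) • q) = W q
      rw [map_smul, smul_smul, ← Complex.ofReal_mul, inv_mul_cancel₀ hc0.ne', Complex.ofReal_one,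
        one_smul]
    rwa [this]

lemma hasSum_clm_apply {B₁ B₂ : Type} [NormedAddCommGroup B₁] [NormedSpace ℂ B₁]
    [NormedAddCommGroup B₂] [NormedSpace ℂ B₂] {u : ℕ → B₁ →L[ℂ] B₂} {T : B₁ →L[ℂ] B₂}
    (h : HasSum u T) (p : B₁) : HasSum (fun n => u n p) (T p) :=
  (ContinuousLinearMap.apply ℂ B₂ p).hasSum h

set_option maxHeartbeats 1000000 in
/-- The combined operators between `S = E ⊕ N` and `N = ⊕_{i=1}^∞ M`: an equivariant operator with
dense range whose adjoint has dense range as well. With `η n` a dense sequence of compactly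
supported elements of `E` in which every term is repeated infinitely often, and `V n`, `W n` the
analysis and synthesis operators of `η n`, the adjoint maps the `n`-th copy of `M` to `S` by
`2⁻ⁿ W n ⊕ 4⁻ⁿ`. -/
lemma exists_dense_operators [SecondCountableTopology E] (d : PGData 𝒢 hs M)
    (hAM : IsNaturalPGAction d AM) (DN : InftySumData X (fun _ => M) N)
    (hDN : IsCoordinateInftyAction DN (fun _ => AM) AN) (DS : SumData X E N S)
    (hDS : IsCoordinateSumAction DS A AN AS) :
    ∃ (T : S →L[ℂ] N) (T' : N →L[ℂ] S), IsAdj X T T' ∧ Equi AS AN T ∧ DenseRange T ∧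
      DenseRange T' := by
  obtain ⟨e, he, hec⟩ := exists_dense_seq X E
  choose L hL hLe using hec
  choose V W hVW hV hV1 hW1 hWe using fun k => exists_pair_contraction d hAM A (hL k) (hLe k)
  obtain ⟨J, Q, hJQ, hJ, hJ1, hQ1, hQJ, hsum⟩ := exists_coordinates DN hDN
  obtain ⟨J₁, Q₁, J₂, Q₂, h1, h2, hE1, hE2, hJ₁n, hQ₁n, hJ₂n, hQ₂n, h12, h22, htot⟩ :=
    exists_summands DS hDS
  set κ : ℕ → ℕ := fun n => (Nat.unpair n).1 with hκ
  set a : ℕ → ℝ := fun n => (1 / 2) ^ n with ha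
  set b : ℕ → ℝ := fun n => (1 / 4) ^ n with hb
  have ha0 : ∀ n, 0 < a n := fun n => by positivity
  have hb0 : ∀ n, 0 < b n := fun n => by positivity
  set α : ℕ → S →L[ℂ] N := fun n => (J n).comp ((V (κ n)).comp Q₁) with hα
  set α' : ℕ → N →L[ℂ] S := fun n => J₁.comp ((W (κ n)).comp (Q n)) with hα'
  set β : ℕ → S →L[ℂ] N := fun n => (J n).comp ((Q n).comp Q₂) with hβ
  set β' : ℕ → N →L[ℂ] S := fun n => J₂.comp ((J n).comp (Q n)) with hβ'
  have hαα : ∀ n, IsAdj X (α n) (α' n) := fun n =>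
    (hJQ n).comp ((hVW (κ n)).comp h1.symm)
  have hββ : ∀ n, IsAdj X (β n) (β' n) := fun n =>
    (hJQ n).comp ((hJQ n).symm.comp h2.symm)
  have hαE : ∀ n, Equi AS AN (α n) := fun n => (hJ n).comp ((hV (κ n)).comp (hE1.adjoint h1))
  have hβE : ∀ n, Equi AS AN (β n) := fun n =>
    (hJ n).comp (((hJ n).adjoint (hJQ n)).comp (hE2.adjoint h2))
  have hcomp : ∀ {B₁ B₂ B₃ B₄ : Type} [NormedAddCommGroup B₁] [NormedSpace ℂ B₁]
      [NormedAddCommGroup B₂] [NormedSpace ℂ B₂] [NormedAddCommGroup B₃] [NormedSpace ℂ B₃]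
      [NormedAddCommGroup B₄] [NormedSpace ℂ B₄] (u : B₃ →L[ℂ] B₄) (v : B₂ →L[ℂ] B₃)
      (w : B₁ →L[ℂ] B₂), ‖u‖ ≤ 1 → ‖v‖ ≤ 1 → ‖w‖ ≤ 1 → ‖u.comp (v.comp w)‖ ≤ 1 := by
    intro _ _ _ _ _ _ _ _ _ _ _ _ u v w hu hv hw
    refine (u.opNorm_comp_le _).trans (mul_le_one₀ hu (norm_nonneg _) ?_)
    exact (v.opNorm_comp_le _).trans (mul_le_one₀ hv (norm_nonneg _) hw)
  set τ : ℕ → S →L[ℂ] N := fun n => (a n : ℂ) • α n + (b n : ℂ) • β n with hτ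
  set τ' : ℕ → N →L[ℂ] S := fun n => (a n : ℂ) • α' n + (b n : ℂ) • β' n with hτ'
  have hsab : Summable fun n => a n + b n :=
    (summable_geometric_of_lt_one (by norm_num) (by norm_num)).add
      (summable_geometric_of_lt_one (by norm_num) (by norm_num))
  have hbound : ∀ {B₁ B₂ : Type} [NormedAddCommGroup B₁] [NormedSpace ℂ B₁]
      [NormedAddCommGroup B₂] [NormedSpace ℂ B₂] (n : ℕ) (u v : B₁ →L[ℂ] B₂), ‖u‖ ≤ 1 → ‖v‖ ≤ 1 →
      ‖(a n : ℂ) • u + (b n : ℂ) • v‖ ≤ a n + b n := by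
    intro _ _ _ _ _ _ n u v hu hv
    refine (norm_add_le _ _).trans (add_le_add ?_ ?_)
    · rw [norm_smul, Complex.norm_real, Real.norm_of_nonneg (ha0 n).le]
      exact mul_le_of_le_one_right (ha0 n).le hu
    · rw [norm_smul, Complex.norm_real, Real.norm_of_nonneg (hb0 n).le]
      exact mul_le_of_le_one_right (hb0 n).le hv
  obtain ⟨T, hT⟩ : Summable τ := Summable.of_norm_bounded hsab fun n => hbound n _ _
    (hcomp _ _ _ (hJ1 n) (hV1 _) hQ₁n) (hcomp _ _ _ (hJ1 n) (hQ1 n) hQ₂n)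
  obtain ⟨T', hT'⟩ : Summable τ' := Summable.of_norm_bounded hsab fun n => hbound n _ _
    (hcomp _ _ _ hJ₁n (hW1 _) (hQ1 n)) (hcomp _ _ _ hJ₂n (hJ1 n) (hQ1 n))
  have hadj : IsAdj X T T' := by
    refine IsAdj.hasSum (fun n x p q => ?_) hT hT'
    have e1 := (hαα n).real_smul (a n) x p q
    have e2 := (hββ n).real_smul (b n) x p q
    change ip x (((a n : ℂ) • α n) p + ((b n : ℂ) • β n) p) q =
      ip x p (((a n : ℂ) • α' n) q + ((b n : ℂ) • β' n) q)
    rw [ip_add_left, ip_add_right, e1, e2]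
  have hequi : Equi AS AN T :=
    Equi.hasSum (fun n => ((hαE n).smul _).add ((hβE n).smul _)) hT
  have hTJ : ∀ m ξ, T (J₂ (J m ξ)) = (b m : ℂ) • J m ξ := by
    intro m ξ
    have e1 : HasSum (fun n => τ n (J₂ (J m ξ))) (T (J₂ (J m ξ))) :=
      hasSum_clm_apply hT _
    have e2 : ∀ n, τ n (J₂ (J m ξ)) = if n = m then (b m : ℂ) • J m ξ else 0 := by
      intro n
      change (a n : ℂ) • J n (V (κ n) (Q₁ (J₂ (J m ξ)))) +
        (b n : ℂ) • J n (Q n (Q₂ (J₂ (J m ξ)))) = _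
      rw [h12, h22, hQJ, map_zero, map_zero, smul_zero, zero_add]
      split_ifs with h
      · rw [h]
      · rw [map_zero, smul_zero]
    simp only [e2] at e1
    exact e1.unique (hasSum_ite_eq m _)
  have hTJ' : ∀ m ξ, T' (J m ξ) = (a m : ℂ) • J₁ (W (κ m) ξ) + (b m : ℂ) • J₂ (J m ξ) := by
    intro m ξ
    have e1 : HasSum (fun n => τ' n (J m ξ)) (T' (J m ξ)) :=
      hasSum_clm_apply hT' _
    have e2 : ∀ n, τ' n (J m ξ) =
        if n = m then (a m : ℂ) • J₁ (W (κ m) ξ) + (b m : ℂ) • J₂ (J m ξ) else 0 := by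
      intro n
      change (a n : ℂ) • J₁ (W (κ n) (Q n (J m ξ))) + (b n : ℂ) • J₂ (J n (Q n (J m ξ))) = _
      rw [hQJ]
      split_ifs with h
      · rw [h]
      · simp only [map_zero, smul_zero, add_zero]
    simp only [e2] at e1
    exact e1.unique (hasSum_ite_eq m _)
  refine ⟨T, T', hadj, hequi, ?_, ?_⟩
  · set R : Submodule ℂ N := (LinearMap.range T.toLinearMap).topologicalClosure with hR
    have hRc : IsClosed (R : Set N) := Submodule.isClosed_topologicalClosure _
    have hRm : ∀ s, T s ∈ R := fun s => Submodule.le_topologicalClosure _ ⟨s, rfl⟩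
    have hRJ : ∀ m ξ, J m ξ ∈ R := by
      intro m ξ
      have e1 := R.smul_mem ((b m : ℂ)⁻¹) (hRm (J₂ (J m ξ)))
      rwa [hTJ, smul_smul, inv_mul_cancel₀ (Complex.ofReal_ne_zero.2 (hb0 m).ne'), one_smul] at e1
    intro z
    have hz : z ∈ R := hRc.mem_of_tendsto (hsum z) (Eventually.of_forall fun s =>
      R.sum_mem fun n _ => hRJ n _)
    rw [hR, ← SetLike.mem_coe, Submodule.topologicalClosure_coe] at hz
    rwa [LinearMap.coe_range] at hz
  · set R : Submodule ℂ S := (LinearMap.range T'.toLinearMap).topologicalClosure with hR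
    have hRc : IsClosed (R : Set S) := Submodule.isClosed_topologicalClosure _
    have hRm : ∀ z, T' z ∈ R := fun z => Submodule.le_topologicalClosure _ ⟨z, rfl⟩
    -- the indices `Nat.pair j i`, `i ∈ ℕ`, all carry the operators `V j`, `W j`; along them the
    -- second term of `2ⁿ T' (J n ξ) = J₁ (W j ξ) + 2⁻ⁿ J₂ (J n ξ)` tends to zero
    have c1 : ∀ j ξ, J₁ (W j ξ) ∈ R := by
      intro j ξ
      have hmt : Tendsto (fun i => Nat.pair j i) atTop atTop :=
        tendsto_atTop_mono (fun i => Nat.right_le_pair j i) tendsto_id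
      have e1 : ∀ i, J₁ (W j ξ) + ((a (Nat.pair j i) : ℝ) : ℂ) • J₂ (J (Nat.pair j i) ξ) ∈ R := by
        intro i
        have e2 := R.smul_mem ((a (Nat.pair j i) : ℂ)⁻¹) (hRm (J (Nat.pair j i) ξ))
        have e3 : κ (Nat.pair j i) = j := by rw [hκ]; simp
        have e4 : ((b (Nat.pair j i) : ℝ) : ℂ) = a (Nat.pair j i) * a (Nat.pair j i) := by
          rw [← Complex.ofReal_mul, ha, hb]
          congr 1
          rw [← mul_pow]
          norm_num
        have e5 : ((a (Nat.pair j i) : ℝ) : ℂ) ≠ 0 := Complex.ofReal_ne_zero.2 (ha0 _).ne'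
        rwa [hTJ', smul_add, smul_smul, smul_smul, e3, e4, inv_mul_cancel₀ e5, one_smul,
          inv_mul_cancel_left₀ e5] at e2
      refine hRc.mem_of_tendsto (f := fun i =>
        J₁ (W j ξ) + ((a (Nat.pair j i) : ℝ) : ℂ) • J₂ (J (Nat.pair j i) ξ)) (b := atTop) ?_
        (Eventually.of_forall e1)
      have e6 : Tendsto (fun i => ((a (Nat.pair j i) : ℝ) : ℂ) • J₂ (J (Nat.pair j i) ξ)) atTop
          (nhds 0) := by
        refine squeeze_zero_norm (a := fun i => a (Nat.pair j i) * ‖ξ‖) (fun i => ?_) ?_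
        · rw [norm_smul, Complex.norm_real, Real.norm_of_nonneg (ha0 _).le]
          refine mul_le_mul_of_nonneg_left ?_ (ha0 _).le
          exact ((J₂.le_of_opNorm_le hJ₂n _).trans (by rw [one_mul])).trans
            (((J _).le_of_opNorm_le (hJ1 _) _).trans (by rw [one_mul]))
        · have e7 : Tendsto a atTop (nhds 0) :=
            tendsto_pow_atTop_nhds_zero_of_lt_one (by norm_num) (by norm_num)
          simpa using (e7.comp hmt).mul_const ‖ξ‖
      simpa using e6.const_add (J₁ (W j ξ))
    have c2 : ∀ p, J₁ p ∈ R := by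
      have hc : IsClosed (J₁ ⁻¹' (R : Set S)) := hRc.preimage J₁.continuous
      intro p
      refine he.induction_on (p := fun p => p ∈ J₁ ⁻¹' (R : Set S)) p hc fun k => ?_
      refine hc.closure_subset (Metric.mem_closure_iff.2 fun ε hε => ?_)
      obtain ⟨q, hq⟩ := hWe k (ε / 2) (by positivity)
      refine ⟨W k q, c1 k q, ?_⟩
      rw [dist_comm, dist_eq_norm]
      linarith
    have c3 : ∀ m ξ, J₂ (J m ξ) ∈ R := by
      intro m ξ
      have e1 := R.smul_mem ((b m : ℂ)⁻¹) (R.sub_mem (hRm (J m ξ)) (R.smul_mem (a m : ℂ)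
        (c2 (W (κ m) ξ))))
      rwa [hTJ', add_sub_cancel_left, smul_smul,
        inv_mul_cancel₀ (Complex.ofReal_ne_zero.2 (hb0 m).ne'), one_smul] at e1
    have c4 : ∀ z, J₂ z ∈ R := fun z => by
      have e1 := J₂.hasSum (hsum z)
      exact hRc.mem_of_tendsto e1 (Eventually.of_forall fun s => R.sum_mem fun n _ => c3 n _)
    intro s
    have hz : s ∈ R := by
      obtain ⟨p, q, rfl⟩ := htot s
      exact R.add_mem (c2 p) (c4 q)
    rw [hR, ← SetLike.mem_coe, Submodule.topologicalClosure_coe] at hz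
    rwa [LinearMap.coe_range] at hz

/-- Existence of a unitary from an equivariant operator which, like its adjoint, has dense range:
the case of operators of arbitrary norm. -/
lemma exists_unitary_of_denseRange (T : S →L[ℂ] N) (T' : N →L[ℂ] S) (hadj : IsAdj X T T')
    (hT : Equi AS AN T) (hd : DenseRange T) (hd' : DenseRange T') : GEquiv AS AN := by
  set c : ℝ := 1 + ‖T‖ + ‖T'‖ with hc
  have hc0 : 0 < c := by positivity
  have hn : ‖((c⁻¹ : ℝ) : ℂ)‖ = c⁻¹ := by
    rw [Complex.norm_real, Real.norm_of_nonneg (inv_nonneg.2 hc0.le)]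
  have hc1 : ((c⁻¹ : ℝ) : ℂ) ≠ 0 := Complex.ofReal_ne_zero.2 (inv_ne_zero hc0.ne')
  refine exists_unitary (((c⁻¹ : ℝ) : ℂ) • T) (((c⁻¹ : ℝ) : ℂ) • T') (hadj.real_smul _) ?_ ?_ ?_ ?_
    (hT.smul _)
  · rw [norm_smul, hn, ← div_eq_inv_mul, div_le_one hc0]
    linarith [norm_nonneg T']
  · rw [norm_smul, hn, ← div_eq_inv_mul, div_le_one hc0]
    linarith [norm_nonneg T]
  · exact (Homeomorph.smulOfNeZero _ hc1).surjective.denseRange.comp hd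
      (Homeomorph.smulOfNeZero _ hc1).continuous
  · exact (Homeomorph.smulOfNeZero _ hc1).surjective.denseRange.comp hd'
      (Homeomorph.smulOfNeZero _ hc1).continuous

end DenseOperators

/-- **Theorem 3.3 (Stabilization theorem for proper groupoids).**  Let `G` be a second
countable locally compact Hausdorff proper groupoid with unit space `Y` and left Haar
system, and let `P` be any `G`-Hilbert module.  Then there is a `G`-equivariant unitary
isomorphism `P ⊕ P_G^∞ ≅ P_G^∞`. -/
theorem stabilization_for_proper_groupoids
    (Y : Type) [TopologicalSpace Y] [T2Space Y] [LocallyCompactSpace Y]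
    [SecondCountableTopology Y]
    (Gp : LCGroupoid Y) (hs : HaarSystem Y Gp)
    (P : Type) [NormedAddCommGroup P] [NormedSpace ℂ P] [CompleteSpace P]
    [SecondCountableTopology P] [HilbertCzeroModule Y P] (AP : GAction Gp P)
    -- P_G with its natural action
    (PG : Type) [NormedAddCommGroup PG] [NormedSpace ℂ PG] [CompleteSpace PG]
    [SecondCountableTopology PG] [HilbertCzeroModule Y PG]
    (d : PGData Gp hs PG) (APG : GAction Gp PG) (hAPG : IsNaturalPGAction d APG)
    -- P_G^∞ with the coordinatewise action
    (PGinf : Type) [NormedAddCommGroup PGinf] [NormedSpace ℂ PGinf] [CompleteSpace PGinf]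
    [SecondCountableTopology PGinf] [HilbertCzeroModule Y PGinf]
    (dinf : InftySumData Y (fun _ => PG) PGinf) (APGinf : GAction Gp PGinf)
    (hinf : IsCoordinateInftyAction dinf (fun _ => APG) APGinf)
    -- S = P ⊕ P_G^∞ with the coordinatewise action
    (S : Type) [NormedAddCommGroup S] [NormedSpace ℂ S] [CompleteSpace S]
    [SecondCountableTopology S] [HilbertCzeroModule Y S]
    (sd : SumData Y P PGinf S) (AS : GAction Gp S)
    (hS : IsCoordinateSumAction sd AP APGinf AS) :
    GEquiv AS APGinf := by
  obtain ⟨T, T', hadj, hT, hd, hd'⟩ := exists_dense_operators d hAPG dinf hinf sd hS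
  exact exists_unitary_of_denseRange T T' hadj hT hd hd'

end Stabilization
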